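/- arXiv:1611.01593 — 5 statements merged into one kernel-verified Lean document; each statement's English description precedes it below -/
import Mathlib

section
/- Operator Bernstein inequality with constant 1: Let σ > 0 and let f : ℂ → ℂ be an entire function such that M := sup_{x ∈ ℝ} |f(x)| is finite and |f(z)| ≤ M·exp(σ·|Im z|) for all z ∈ ℂ (i.e. f belongs to 𝓔_σ ∩ L^∞(ℝ)). Then for all bounded self-adjoint operators A and B on a complex Hilbert space, ‖f(A) − f(B)‖ ≤ β(σ·‖A − B‖)·M, and in particular ‖f(A) − f(B)‖ ≤ σ·M·‖A − B‖, where β(t) = 2·sin(t/2) for 0 ≤ t ≤ π and β(t) = 2 for t > π. -/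
open Filter Topology Metric Set in
theorem aux_residue {E : Type*} [NormedAddCommGroup E] [NormedSpace ℂ E] [CompleteSpace E]
    {R : ℝ} (hR : 0 < R) {U : Set ℂ} (hU : IsOpen U) (hRU : closedBall (0 : ℂ) R ⊆ U)
    (r : ℂ → E) (S : Finset ℂ) :
    ∀ F : ℂ → E, (∀ a ∈ S, a ∈ ball (0 : ℂ) R) → DifferentiableOn ℂ F (U \ (S : Set ℂ)) →
      (∀ a ∈ S, Tendsto (fun z => (z - a) • F z) (𝓝[≠] a) (𝓝 (r a))) →
      (∮ z in C(0, R), F z) = (2 * Real.pi * Complex.I : ℂ) • ∑ a ∈ S, r a := by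
  classical
  induction S using Finset.induction_on with
  | empty =>
    intro F _ hF _
    simp only [Finset.coe_empty, sdiff_empty] at hF
    simp only [Finset.sum_empty, smul_zero]
    apply Complex.circleIntegral_eq_zero_of_differentiable_on_off_countable hR.le
      (s := ∅) countable_empty (hF.continuousOn.mono hRU)
    intro z hz
    exact hF.differentiableAt (hU.mem_nhds (hRU (ball_subset_closedBall hz.1)))
  | insert a S ha ih =>
    intro F hS hF hr
    have haR : a ∈ ball (0 : ℂ) R := hS a (Finset.mem_insert_self _ _)
    have haU : a ∈ U := hRU (ball_subset_closedBall haR)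
    set G : ℂ → E := fun z => F z - (z - a)⁻¹ • r a with hG
    have hSc : IsClosed (S : Set ℂ) := S.finite_toSet.isClosed
    have hGd : DifferentiableOn ℂ G ((U \ (S : Set ℂ)) \ {a}) := by
      intro z hz
      have hz1 : z ∈ U \ ((insert a S : Finset ℂ) : Set ℂ) := by
        refine ⟨hz.1.1, ?_⟩
        simp only [Finset.coe_insert, mem_insert_iff, not_or]
        exact ⟨hz.2, hz.1.2⟩
      have h1 : DifferentiableWithinAt ℂ F ((U \ (S : Set ℂ)) \ {a}) z := by
        refine (hF z hz1).mono ?_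
        intro w hw
        refine ⟨hw.1.1, ?_⟩
        simp only [Finset.coe_insert, mem_insert_iff, not_or]
        exact ⟨hw.2, hw.1.2⟩
      have h2 : z - a ≠ 0 := sub_ne_zero.2 hz.2
      refine h1.sub (DifferentiableAt.differentiableWithinAt ?_)
      exact (((differentiableAt_id.sub_const a).inv h2).smul_const (r a))
    have hnh : U \ (S : Set ℂ) ∈ 𝓝 a := (hU.sdiff hSc).mem_nhds ⟨haU, by simpa using ha⟩
    have hlo : (fun z => G z - G a) =o[𝓝[≠] a] fun z => (z - a)⁻¹ := by
      have t1 : Tendsto (fun z : ℂ => (z - a) • (G z - G a)) (𝓝[≠] a) (𝓝 0) := by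
        have t2 := hr a (Finset.mem_insert_self _ _)
        have t3 : Tendsto (fun z : ℂ => (z - a) • G a) (𝓝[≠] a) (𝓝 0) := by
          have : ContinuousAt (fun z : ℂ => (z - a) • G a) a := by fun_prop
          have h3 := this.tendsto
          simp only [sub_self, zero_smul] at h3
          exact h3.mono_left nhdsWithin_le_nhds
        have t4 := (t2.sub_const (r a)).sub t3
        rw [sub_self, sub_zero] at t4
        refine t4.congr' ?_
        filter_upwards [self_mem_nhdsWithin] with z hz
        have h2 : z - a ≠ 0 := sub_ne_zero.2 hz
        rw [smul_sub (z - a) (G z) (G a)]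
        congr 1
        simp only [hG]
        rw [smul_sub, smul_smul, mul_inv_cancel₀ h2, one_smul]
      have t5 := (Asymptotics.isBigO_refl (fun z : ℂ => (z - a)⁻¹) (𝓝[≠] a)).smul_isLittleO
        ((Asymptotics.isLittleO_one_iff ℂ).2 t1)
      refine t5.congr' ?_ ?_
      · filter_upwards [self_mem_nhdsWithin] with z hz
        have h2 : z - a ≠ 0 := sub_ne_zero.2 hz
        rw [smul_smul, inv_mul_cancel₀ h2, one_smul]
      · filter_upwards with z
        simp
    have hd := Complex.differentiableOn_update_limUnder_of_isLittleO hnh hGd hlo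
    set G' := Function.update G a (limUnder (𝓝[≠] a) G) with hG'
    have hG'eq : ∀ z, z ≠ a → G' z = G z := fun z hz => Function.update_of_ne hz _ _
    have key := ih G' (fun b hb => hS b (Finset.mem_insert_of_mem hb)) hd ?_
    · have e1 : (∮ z in C(0, R), G' z) = ∮ z in C(0, R), (F z - (z - a)⁻¹ • r a) := by
        apply circleIntegral.integral_congr hR.le
        intro z hz
        refine hG'eq z ?_
        rintro rfl
        exact (ne_of_lt haR) hz
      have hne : ∀ z ∈ sphere (0 : ℂ) R, z - a ≠ 0 := by
        intro z hz h0
        rw [sub_eq_zero] at h0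
        subst h0
        exact (ne_of_lt haR) hz
      have hFc : ContinuousOn F (sphere (0 : ℂ) R) := by
        refine hF.continuousOn.mono ?_
        intro z hz
        refine ⟨hRU (sphere_subset_closedBall hz), ?_⟩
        intro hzS
        exact (ne_of_lt (hS z (by exact_mod_cast hzS))) hz
      have hic : ContinuousOn (fun z : ℂ => (z - a)⁻¹ • r a) (sphere (0 : ℂ) R) :=
        ((continuousOn_id.sub continuousOn_const).inv₀ hne).smul continuousOn_const
      rw [circleIntegral.integral_sub (hFc.circleIntegrable hR.le) (hic.circleIntegrable hR.le),
        circleIntegral.integral_smul_const, circleIntegral.integral_sub_inv_of_mem_ball haR, key] at e1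
      rw [Finset.sum_insert ha, smul_add, e1]
      abel
    · intro b hb
      have hba : b ≠ a := fun h => ha (h ▸ hb)
      have h1 := hr b (Finset.mem_insert_of_mem hb)
      have h2 : Tendsto (fun z : ℂ => (z - b) • ((z - a)⁻¹ • r a)) (𝓝[≠] b) (𝓝 0) := by
        have : ContinuousAt (fun z : ℂ => (z - b) • ((z - a)⁻¹ • r a)) b := by
          have := sub_ne_zero.2 hba
          fun_prop (disch := assumption)
        have h3 := this.tendsto
        simp only [sub_self, zero_smul] at h3
        exact h3.mono_left nhdsWithin_le_nhds
      have h4 := h1.sub h2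
      rw [sub_zero] at h4
      refine h4.congr' ?_
      have : ∀ᶠ z in 𝓝[≠] b, z ≠ a := nhdsWithin_le_nhds (isOpen_ne.mem_nhds hba)
      filter_upwards [this] with z hz
      rw [hG'eq z hz, hG, smul_sub]

theorem aux_norm_cos_sq (z : ℂ) :
    ‖Complex.cos z‖ ^ 2 = Real.cos z.re ^ 2 + Real.sinh z.im ^ 2 := by
  have h : Complex.cos z = ((Real.cos z.re * Real.cosh z.im : ℝ) : ℂ)
      + ((-(Real.sin z.re * Real.sinh z.im) : ℝ) : ℂ) * Complex.I := by
    rw [Complex.cos_eq]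
    push_cast
    ring
  rw [h, Complex.sq_norm, Complex.normSq_add_mul_I]
  have h1 := Real.sin_sq_add_cos_sq z.re
  have h2 := Real.cosh_sq z.im
  rw [mul_pow, neg_sq, mul_pow, h2]
  linear_combination (Real.sinh z.im ^ 2) * h1

theorem aux_cos_lower (N : ℕ) (hN : 1 ≤ N) (z : ℂ) (hz : ‖z‖ = N) :
    Real.exp (Real.pi * |z.im|) ≤ 6 * ‖Complex.cos (Real.pi * z)‖ := by
  have hsq := aux_norm_cos_sq (Real.pi * z)
  have hre : ((Real.pi : ℂ) * z).re = Real.pi * z.re := by simp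
  have him : ((Real.pi : ℂ) * z).im = Real.pi * z.im := by simp
  rw [hre, him] at hsq
  set X := ‖Complex.cos (Real.pi * z)‖ with hX
  have hX0 : 0 ≤ X := norm_nonneg _
  have hpi := Real.pi_gt_three
  have hpi4 := Real.pi_lt_d2
  have hN' : (1 : ℝ) ≤ N := by exact_mod_cast hN
  have hn : z.re ^ 2 + z.im ^ 2 = (N : ℝ) ^ 2 := by
    rw [← hz, Complex.sq_norm, Complex.normSq_apply]; ring
  by_cases hy : |z.im| ≤ 1 / 4
  · have hy2 : z.im ^ 2 ≤ 1 / 16 := by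
      rw [← sq_abs]; nlinarith [abs_nonneg z.im]
    set d := (N : ℝ) - |z.re| with hd
    have hx0 := abs_nonneg z.re
    have hx2 := sq_abs z.re
    have hd0 : 0 ≤ d := by nlinarith [sq_nonneg z.im]
    have hd1 : d ≤ 1 / 16 := by nlinarith
    have hcos : Real.cos (Real.pi * z.re) ^ 2 = Real.cos (Real.pi * d) ^ 2 := by
      have : Real.cos (Real.pi * d) = (-1) ^ N * Real.cos (Real.pi * z.re) := by
        have e : Real.pi * d = N * Real.pi - |Real.pi * z.re| := by
          rw [abs_mul, abs_of_pos Real.pi_pos, hd]; ring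
        rw [e, Real.cos_nat_mul_pi_sub, Real.cos_abs]
      rw [this, mul_pow, ← pow_mul, mul_comm N 2, pow_mul]; simp
    have hc2 : 1 / 2 ≤ Real.cos (Real.pi * d) := by
      rw [← Real.cos_pi_div_three]
      apply Real.cos_le_cos_of_nonneg_of_le_pi <;> nlinarith
    have hXl : 1 / 2 ≤ X := by
      rw [hcos] at hsq
      by_contra hlt
      push Not at hlt
      nlinarith [sq_nonneg (Real.sinh (Real.pi * z.im))]
    have he : Real.exp (Real.pi * |z.im|) ≤ 3 := by
      calc Real.exp (Real.pi * |z.im|) ≤ Real.exp 1 := by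
            apply Real.exp_le_exp.2; nlinarith [abs_nonneg z.im]
        _ ≤ 3 := by have := Real.exp_one_lt_d9; linarith
    linarith
  · push Not at hy
    have hs : Real.sinh (Real.pi * z.im) ^ 2 = Real.sinh (Real.pi * |z.im|) ^ 2 := by
      rcases abs_cases z.im with h | h
      · rw [h.1]
      · rw [h.1, mul_neg, Real.sinh_neg, neg_sq]
    set w := Real.pi * |z.im| with hw
    have hw1 : 3 / 4 ≤ w := by nlinarith
    have hX1 : Real.sinh w ≤ X := by
      refine (sq_le_sq₀ (Real.sinh_nonneg_iff.2 (by linarith)) hX0).1 ?_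
      nlinarith [sq_nonneg (Real.cos (Real.pi * z.re))]
    rw [Real.sinh_eq] at hX1
    have h2 : 7 / 4 ≤ Real.exp w := by linarith [Real.add_one_le_exp w]
    have h3 : Real.exp (-w) ≤ 4 / 7 := by
      rw [Real.exp_neg]
      calc (Real.exp w)⁻¹ ≤ (7 / 4)⁻¹ := by gcongr
        _ = 4 / 7 := by norm_num
    linarith

open Filter Topology Metric Set in
theorem aux_interp {E : Type*} [NormedAddCommGroup E] [NormedSpace ℂ E] [CompleteSpace E]
    (h : ℝ) (h0 : 0 < h) (h1 : h < 1 / 2) (φ : ℂ → E) (hφ : Differentiable ℂ φ) (C : ℝ)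
    (hC : ∀ z, ‖φ z‖ ≤ C * Real.exp (Real.pi * |z.im|)) (N : ℕ) (hN : 1 ≤ N) :
    ‖((2 * h * Real.cos (Real.pi * h) : ℝ) : ℂ)⁻¹ • (φ h - φ (-h))
      - ∑ k ∈ Finset.Ico (-N : ℤ) N,
        ((Real.pi * Real.sin (Real.pi * (k + 1 / 2)) * ((k + 1 / 2 : ℝ) ^ 2 - h ^ 2) : ℝ) : ℂ)⁻¹ •
          φ ((k + 1 / 2 : ℝ) : ℂ)‖ ≤ 12 * C / N := by
  classical
  have hpi := Real.pi_pos
  have hN' : (1 : ℝ) ≤ N := by exact_mod_cast hN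
  have hC0 : 0 ≤ C := by
    have := (norm_nonneg _).trans (hC 0)
    simpa using this
  set D : ℂ → ℂ := fun z => Complex.cos (Real.pi * z) * (z ^ 2 - (h : ℂ) ^ 2) with hD
  set D' : ℂ → ℂ := fun z => -(Real.pi * Complex.sin (Real.pi * z)) * (z ^ 2 - (h : ℂ) ^ 2)
    + Complex.cos (Real.pi * z) * (2 * z) with hD'
  have hDd : ∀ z, HasDerivAt D (D' z) z := by
    intro z
    have e1 : HasDerivAt (fun z : ℂ => (Real.pi : ℂ) * z) (Real.pi : ℂ) z := by
      simpa using (hasDerivAt_id z).const_mul (Real.pi : ℂ)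
    have e2 := (Complex.hasDerivAt_cos (Real.pi * z)).comp z e1
    have e3 : HasDerivAt (fun z : ℂ => z ^ 2 - (h : ℂ) ^ 2) (2 * z) z := by
      simpa using (hasDerivAt_pow 2 z).sub_const ((h : ℂ) ^ 2)
    have e4 : HasDerivAt D _ z := e2.mul e3
    refine e4.congr_deriv ?_
    simp only [hD', Function.comp_apply]
    ring
  set t : ℤ → ℂ := fun k => ((k + 1 / 2 : ℝ) : ℂ) with ht
  have ht_inj : Function.Injective t := by
    intro a b hab
    have : ((a : ℝ) + 1 / 2) = b + 1 / 2 := Complex.ofReal_injective hab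
    have : (a : ℝ) = b := by linarith
    exact_mod_cast this
  have hcos_t : ∀ k : ℤ, Real.cos (Real.pi * (k + 1 / 2)) = 0 := by
    intro k
    rw [Real.cos_eq_zero_iff]
    exact ⟨k, by ring⟩
  have hsin_t : ∀ k : ℤ, Real.sin (Real.pi * (k + 1 / 2)) ≠ 0 := by
    intro k hk
    have := Real.sin_sq_add_cos_sq (Real.pi * (k + 1 / 2))
    rw [hk, hcos_t k] at this
    norm_num at this
  have ht_sq : ∀ k : ℤ, 0 < ((k : ℝ) + 1 / 2) ^ 2 - h ^ 2 := by
    intro k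
    have : (1 / 4 : ℝ) ≤ ((k : ℝ) + 1 / 2) ^ 2 := by
      have : (0 : ℝ) ≤ (k : ℝ) * (k + 1) := by
        rcases le_or_gt 0 k with hk | hk
        · have : (0 : ℝ) ≤ k := by exact_mod_cast hk
          positivity
        · have : (k : ℝ) + 1 ≤ 0 := by exact_mod_cast hk
          nlinarith
      nlinarith
    nlinarith
  have hcosh : 0 < Real.cos (Real.pi * h) :=
    Real.cos_pos_of_mem_Ioo ⟨by nlinarith, by nlinarith⟩
  have hDt : ∀ k, D (t k) = 0 := by
    intro k
    have : Complex.cos (Real.pi * t k) = 0 := by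
      have := hcos_t k
      simp only [ht]
      exact_mod_cast this
    simp [hD, this]
  have hDt' : ∀ k : ℤ, D' (t k) =
      -((Real.pi * Real.sin (Real.pi * (k + 1 / 2)) * ((k + 1 / 2 : ℝ) ^ 2 - h ^ 2) : ℝ) : ℂ) := by
    intro k
    have : Complex.cos (Real.pi * t k) = 0 := by
      have := hcos_t k
      simp only [ht]
      exact_mod_cast this
    have e : D' (t k) = -(Real.pi * Complex.sin (Real.pi * t k)) * (t k ^ 2 - (h : ℂ) ^ 2)
      + Complex.cos (Real.pi * t k) * (2 * t k) := rfl
    rw [e, this]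
    simp only [ht]
    push_cast
    ring
  have hDh : D h = 0 := by simp [hD]
  have hDh2 : D (-h) = 0 := by simp [hD]
  have hDh' : D' h = ((2 * h * Real.cos (Real.pi * h) : ℝ) : ℂ) := by
    simp only [hD']; push_cast; ring
  have hDh2' : D' (-h) = -((2 * h * Real.cos (Real.pi * h) : ℝ) : ℂ) := by
    simp only [hD', mul_neg, Complex.cos_neg]; push_cast; ring
  set T : Finset ℂ := (Finset.Ico (-N : ℤ) N).image t with hT
  set S : Finset ℂ := insert (h : ℂ) (insert (-h : ℂ) T) with hS
  have hzero : ∀ a ∈ S, D a = 0 ∧ D' a ≠ 0 ∧ a ∈ ball (0 : ℂ) N := by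
    intro a ha
    simp only [hS, Finset.mem_insert, hT, Finset.mem_image] at ha
    have hne : ((2 * h * Real.cos (Real.pi * h) : ℝ) : ℂ) ≠ 0 := by
      have : 2 * h * Real.cos (Real.pi * h) ≠ 0 := by positivity
      exact_mod_cast this
    rcases ha with rfl | rfl | ⟨k, hk, rfl⟩
    · refine ⟨hDh, by rw [hDh']; exact hne, ?_⟩
      simp [abs_of_pos h0]; linarith
    · refine ⟨hDh2, by rw [hDh2']; exact neg_ne_zero.2 hne, ?_⟩
      simp [abs_of_pos h0]; linarith
    · refine ⟨hDt k, ?_, ?_⟩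
      · rw [hDt' k]
        refine neg_ne_zero.2 ?_
        have : Real.pi * Real.sin (Real.pi * (k + 1 / 2)) * ((k + 1 / 2 : ℝ) ^ 2 - h ^ 2) ≠ 0 :=
          mul_ne_zero (mul_ne_zero hpi.ne' (hsin_t k)) (ht_sq k).ne'
        exact_mod_cast this
      · rw [Finset.mem_Ico] at hk
        have k1 : -(N : ℝ) ≤ k := by exact_mod_cast hk.1
        have k2 : (k : ℝ) + 1 ≤ N := by exact_mod_cast hk.2
        rw [mem_ball_zero_iff]
        simp only [ht]
        rw [Complex.norm_real, Real.norm_eq_abs, abs_lt]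
        constructor <;> linarith
  have hDnz : ∀ z ∈ ball (0 : ℂ) (N + 1 / 2) \ (S : Set ℂ), D z ≠ 0 := by
    rintro z ⟨hz, hzS⟩ hDz
    apply hzS
    simp only [hD, mul_eq_zero] at hDz
    simp only [hS, Finset.coe_insert, mem_insert_iff, Finset.mem_coe, hT, Finset.mem_image]
    rcases hDz with hc | hc
    · right; right
      rw [Complex.cos_eq_zero_iff] at hc
      obtain ⟨k, hk⟩ := hc
      have hpc : (Real.pi : ℂ) ≠ 0 := by exact_mod_cast hpi.ne'
      have hzk : z = t k := by
        apply mul_left_cancel₀ hpc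
        rw [hk]; simp only [ht]; push_cast; ring
      refine ⟨k, ?_, hzk.symm⟩
      rw [hzk, mem_ball_zero_iff] at hz
      simp only [ht] at hz
      rw [Complex.norm_real, Real.norm_eq_abs, abs_lt] at hz
      rw [Finset.mem_Ico]
      have k1 : -(N : ℝ) - 1 < k := by linarith [hz.1]
      have k2 : (k : ℝ) < N := by linarith [hz.2]
      have k1' : -(N : ℤ) - 1 < k := by exact_mod_cast k1
      have k2' : k < N := by exact_mod_cast k2
      omega
    · have := sq_eq_sq_iff_eq_or_eq_neg.1 (sub_eq_zero.1 hc)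
      rcases this with h | h
      · left; exact h
      · right; left; exact h
  have hDdiff : Differentiable ℂ D := fun z => (hDd z).differentiableAt
  have hres := aux_residue (R := (N : ℝ)) (by linarith) (U := ball (0 : ℂ) (N + 1 / 2)) isOpen_ball
    (closedBall_subset_ball (by linarith)) (fun a => (D' a)⁻¹ • φ a) S (fun z => (D z)⁻¹ • φ z)
    (fun a ha => (hzero a ha).2.2)
    (by
      intro z hz
      exact ((hDdiff z).inv (hDnz z hz)).smul (hφ z) |>.differentiableWithinAt)
    (by
      intro a ha
      obtain ⟨z1, z2, _⟩ := hzero a ha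
      have hsl := (hasDerivAt_iff_tendsto_slope.1 (hDd a)).inv₀ z2
      have hphi : Tendsto φ (𝓝[≠] a) (𝓝 (φ a)) :=
        (hφ a).continuousAt.tendsto.mono_left nhdsWithin_le_nhds
      refine (hsl.smul hphi).congr ?_
      intro z
      rw [slope_def_field, z1, sub_zero, inv_div, smul_smul, div_eq_mul_inv])
  have hbd : ‖∮ z in C(0, (N : ℝ)), (D z)⁻¹ • φ z‖ ≤ 2 * Real.pi * N * (12 * C / N ^ 2) := by
    apply circleIntegral.norm_integral_le_of_norm_le_const (by linarith)
    intro z hz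
    have hz' : ‖z‖ = N := by simpa using hz
    have c1 := aux_cos_lower N hN z hz'
    have c2 : (N : ℝ) ^ 2 / 2 ≤ ‖z ^ 2 - (h : ℂ) ^ 2‖ := by
      have := norm_sub_norm_le (z ^ 2) ((h : ℂ) ^ 2)
      rw [norm_pow, norm_pow, hz', Complex.norm_real, Real.norm_eq_abs, abs_of_pos h0] at this
      nlinarith
    have c3 := hC z
    have cpos : 0 < ‖Complex.cos (Real.pi * z)‖ := by
      have := Real.exp_pos (Real.pi * |z.im|)
      linarith
    have cpos2 : 0 < ‖z ^ 2 - (h : ℂ) ^ 2‖ := lt_of_lt_of_le (by positivity) c2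
    rw [norm_smul, norm_inv, hD]
    simp only [norm_mul]
    rw [inv_mul_le_iff₀ (by positivity)]
    calc ‖φ z‖ ≤ C * Real.exp (Real.pi * |z.im|) := c3
      _ ≤ C * (6 * ‖Complex.cos (Real.pi * z)‖) := by gcongr
      _ = ‖Complex.cos (Real.pi * z)‖ * (N ^ 2 / 2) * (12 * C / N ^ 2) := by
        field_simp; ring
      _ ≤ ‖Complex.cos (Real.pi * z)‖ * ‖z ^ 2 - (h : ℂ) ^ 2‖ * (12 * C / N ^ 2) := by gcongr
  have hnotT : ∀ x : ℝ, |x| = h → (x : ℂ) ∉ T := by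
    intro x hx hxT
    simp only [hT, Finset.mem_image] at hxT
    obtain ⟨k, _, hk⟩ := hxT
    have hk' : (k : ℝ) + 1 / 2 = x := Complex.ofReal_injective hk
    have := ht_sq k
    rw [hk', ← hx, sq_abs] at this
    linarith
  have hsum : ∑ a ∈ S, (D' a)⁻¹ • φ a =
      ((2 * h * Real.cos (Real.pi * h) : ℝ) : ℂ)⁻¹ • (φ h - φ (-h))
      - ∑ k ∈ Finset.Ico (-N : ℤ) N,
        ((Real.pi * Real.sin (Real.pi * (k + 1 / 2)) * ((k + 1 / 2 : ℝ) ^ 2 - h ^ 2) : ℝ) : ℂ)⁻¹ •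
          φ ((k + 1 / 2 : ℝ) : ℂ) := by
    have n1 : (-h : ℂ) ∉ T := by
      have := hnotT (-h) (by rw [abs_neg, abs_of_pos h0])
      simpa using this
    have n2 : (h : ℂ) ∉ insert (-h : ℂ) T := by
      rw [Finset.mem_insert, not_or]
      refine ⟨?_, hnotT h (abs_of_pos h0)⟩
      intro hh
      have : h = -h := by exact_mod_cast hh
      linarith
    rw [hS, Finset.sum_insert n2, Finset.sum_insert n1, hT, Finset.sum_image (fun a _ b _ hab => ht_inj hab),
      hDh', hDh2']
    simp only [hDt', inv_neg, neg_smul, Finset.sum_neg_distrib, smul_sub]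
    simp only [ht]
    abel
  rw [← hsum]
  have hnorm : ‖(2 * Real.pi * Complex.I : ℂ)‖ = 2 * Real.pi := by
    simp [abs_of_pos hpi]
  have := hbd
  rw [hres, norm_smul, hnorm] at this
  have h2p : 0 < 2 * Real.pi := by positivity
  refine le_of_mul_le_mul_left (this.trans (le_of_eq ?_)) h2p
  field_simp

open Filter Topology in
theorem aux_bern {E : Type*} [NormedAddCommGroup E] [NormedSpace ℂ E] [CompleteSpace E]
    (h : ℝ) (h0 : 0 < h) (h1 : h < 1 / 2) (φ : ℂ → E) (hφ : Differentiable ℂ φ) (C M : ℝ)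
    (hC : ∀ z, ‖φ z‖ ≤ C * Real.exp (Real.pi * |z.im|)) (hM : ∀ x : ℝ, ‖φ x‖ ≤ M) :
    ‖φ h - φ (-h)‖ ≤ 2 * Real.sin (Real.pi * h) * M := by
  have hpi := Real.pi_pos
  have hM0 : 0 ≤ M := (norm_nonneg _).trans (hM 0)
  have hcosh : 0 < Real.cos (Real.pi * h) :=
    Real.cos_pos_of_mem_Ioo ⟨by nlinarith, by nlinarith⟩
  set c := 2 * h * Real.cos (Real.pi * h) with hc
  have hc0 : 0 < c := by positivity
  have ht_sq : ∀ k : ℤ, 0 < ((k : ℝ) + 1 / 2) ^ 2 - h ^ 2 := by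
    intro k
    have : (1 / 4 : ℝ) ≤ ((k : ℝ) + 1 / 2) ^ 2 := by
      have : (0 : ℝ) ≤ (k : ℝ) * (k + 1) := by
        rcases le_or_gt 0 k with hk | hk
        · have : (0 : ℝ) ≤ k := by exact_mod_cast hk
          positivity
        · have : (k : ℝ) + 1 ≤ 0 := by exact_mod_cast hk
          nlinarith
      nlinarith
    nlinarith
  have hcos_t : ∀ k : ℤ, Real.cos (Real.pi * (k + 1 / 2)) = 0 := by
    intro k
    rw [Real.cos_eq_zero_iff]
    exact ⟨k, by ring⟩
  have hsin_t : ∀ k : ℤ, Real.sin (Real.pi * (k + 1 / 2)) ^ 2 = 1 := by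
    intro k
    have := Real.sin_sq_add_cos_sq (Real.pi * (k + 1 / 2))
    rw [hcos_t k] at this
    linarith
  -- the weights
  set W : ℕ → ℝ := fun N => ∑ k ∈ Finset.Ico (-N : ℤ) N,
    (Real.pi * (((k : ℝ) + 1 / 2) ^ 2 - h ^ 2))⁻¹ with hW
  have hsinb : ∀ z : ℂ, ‖Complex.sin (Real.pi * z)‖ ≤ 1 * Real.exp (Real.pi * |z.im|) := by
    intro z
    have e : Complex.sin (Real.pi * z) = (Complex.exp (-(Real.pi * z) * Complex.I)
      - Complex.exp (Real.pi * z * Complex.I)) * Complex.I / 2 := rfl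
    rw [e, norm_div, norm_mul, Complex.norm_I, mul_one]
    have n1 : ‖Complex.exp (-(Real.pi * z) * Complex.I)‖ ≤ Real.exp (Real.pi * |z.im|) := by
      rw [Complex.norm_exp]
      apply Real.exp_le_exp.2
      simp
      nlinarith [le_abs_self z.im]
    have n2 : ‖Complex.exp (Real.pi * z * Complex.I)‖ ≤ Real.exp (Real.pi * |z.im|) := by
      rw [Complex.norm_exp]
      apply Real.exp_le_exp.2
      simp
      nlinarith [neg_abs_le z.im]
    have n3 := norm_sub_le (Complex.exp (-(Real.pi * z) * Complex.I)) (Complex.exp (Real.pi * z * Complex.I))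
    have : ‖(2 : ℂ)‖ = 2 := by simp
    rw [this]
    linarith
  have hsinW : ∀ N : ℕ, 1 ≤ N → W N ≤ c⁻¹ * (2 * Real.sin (Real.pi * h)) + 12 * 1 / N := by
    intro N hN
    have key := aux_interp h h0 h1 (fun z => Complex.sin (Real.pi * z)) (by fun_prop) 1 hsinb N hN
    have e : ((2 * h * Real.cos (Real.pi * h) : ℝ) : ℂ)⁻¹ •
        (Complex.sin (Real.pi * h) - Complex.sin (Real.pi * (-h)))
      - ∑ k ∈ Finset.Ico (-N : ℤ) N,
        ((Real.pi * Real.sin (Real.pi * (k + 1 / 2)) * ((k + 1 / 2 : ℝ) ^ 2 - h ^ 2) : ℝ) : ℂ)⁻¹ •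
          Complex.sin (Real.pi * ((k + 1 / 2 : ℝ) : ℂ))
        = ((c⁻¹ * (2 * Real.sin (Real.pi * h)) - W N : ℝ) : ℂ) := by
      have e2 : ∀ k : ℤ, ((Real.pi * Real.sin (Real.pi * (k + 1 / 2)) * ((k + 1 / 2 : ℝ) ^ 2 - h ^ 2) : ℝ) : ℂ)⁻¹ •
          Complex.sin (Real.pi * ((k + 1 / 2 : ℝ) : ℂ)) =
          (((Real.pi * (((k : ℝ) + 1 / 2) ^ 2 - h ^ 2))⁻¹ : ℝ) : ℂ) := by
        intro k
        rw [smul_eq_mul, ← Complex.ofReal_mul, ← Complex.ofReal_sin, ← Complex.ofReal_inv,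
          ← Complex.ofReal_mul]
        congr 1
        have s1 := hsin_t k
        have s2 : Real.sin (Real.pi * (k + 1 / 2)) ≠ 0 := by
          intro h; rw [h] at s1; norm_num at s1
        have s3 := (ht_sq k).ne'
        generalize Real.sin (Real.pi * (k + 1 / 2)) = s at s2
        generalize ((k : ℝ) + 1 / 2) ^ 2 - h ^ 2 = q at s3
        field_simp
      simp only [e2]
      rw [mul_neg, Complex.sin_neg, smul_eq_mul, ← Complex.ofReal_mul, ← Complex.ofReal_sin]
      rw [← hc, Complex.ofReal_sub, Complex.ofReal_mul c⁻¹, Complex.ofReal_inv c, hW,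
        Complex.ofReal_sum, Complex.ofReal_mul 2, Complex.ofReal_ofNat]
      ring
    rw [e, Complex.norm_real, Real.norm_eq_abs] at key
    linarith [neg_abs_le (c⁻¹ * (2 * Real.sin (Real.pi * h)) - W N)]
  have hmain : ∀ N : ℕ, 1 ≤ N → c⁻¹ * ‖φ h - φ (-h)‖ ≤
      (c⁻¹ * (2 * Real.sin (Real.pi * h)) + 12 * 1 / N) * M + 12 * C / N := by
    intro N hN
    have key := aux_interp h h0 h1 φ hφ C hC N hN
    have hs : ‖∑ k ∈ Finset.Ico (-N : ℤ) N,
        ((Real.pi * Real.sin (Real.pi * (k + 1 / 2)) * ((k + 1 / 2 : ℝ) ^ 2 - h ^ 2) : ℝ) : ℂ)⁻¹ •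
          φ ((k + 1 / 2 : ℝ) : ℂ)‖ ≤ W N * M := by
      rw [hW, Finset.sum_mul]
      refine norm_sum_le_of_le _ ?_
      intro k _
      rw [norm_smul, norm_inv, Complex.norm_real, Real.norm_eq_abs, abs_mul, abs_mul,
        abs_of_pos hpi, abs_of_pos (ht_sq k)]
      have : |Real.sin (Real.pi * (k + 1 / 2))| = 1 := by
        rw [← sq_eq_sq₀ (abs_nonneg _) zero_le_one, sq_abs, hsin_t k]; norm_num
      rw [this, mul_one]
      have := ht_sq k
      gcongr
      exact hM _
    have e1 : ‖((2 * h * Real.cos (Real.pi * h) : ℝ) : ℂ)⁻¹ • (φ h - φ (-h))‖ = c⁻¹ * ‖φ h - φ (-h)‖ := by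
      rw [norm_smul, norm_inv, Complex.norm_real, Real.norm_eq_abs, abs_of_pos hc0]
    rw [← e1]
    have tri := norm_sub_norm_le (((2 * h * Real.cos (Real.pi * h) : ℝ) : ℂ)⁻¹ • (φ h - φ (-h)))
      (∑ k ∈ Finset.Ico (-N : ℤ) N,
        ((Real.pi * Real.sin (Real.pi * (k + 1 / 2)) * ((k + 1 / 2 : ℝ) ^ 2 - h ^ 2) : ℝ) : ℂ)⁻¹ •
          φ ((k + 1 / 2 : ℝ) : ℂ))
    have w := mul_le_mul_of_nonneg_right (hsinW N hN) hM0
    linarith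
  have hlim : Tendsto (fun N : ℕ => (c⁻¹ * (2 * Real.sin (Real.pi * h)) + 12 * 1 / (N : ℝ)) * M
      + 12 * C / (N : ℝ)) atTop (𝓝 ((c⁻¹ * (2 * Real.sin (Real.pi * h)) + 0) * M + 0)) := by
    refine Tendsto.add (Tendsto.mul_const _ (Tendsto.const_add _ ?_)) ?_
    · exact tendsto_const_div_atTop_nhds_zero_nat _
    · exact tendsto_const_div_atTop_nhds_zero_nat _
  have := ge_of_tendsto hlim (by
    filter_upwards [eventually_ge_atTop 1] with N hN
    exact hmain N hN)
  have h2 := mul_le_mul_of_nonneg_left this hc0.le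
  have hcc := mul_inv_cancel₀ hc0.ne'
  calc ‖φ h - φ (-h)‖ = c * (c⁻¹ * ‖φ h - φ (-h)‖) := by rw [← mul_assoc, hcc, one_mul]
    _ ≤ _ := h2
    _ = 2 * Real.sin (Real.pi * h) * M := by
      rw [add_zero, add_zero, ← mul_assoc, ← mul_assoc, hcc, one_mul]

open Filter Topology in
theorem aux_pl_upper {E : Type*} [NormedAddCommGroup E] [NormedSpace ℂ E]
    (G : ℂ → E) (hG : Differentiable ℂ G) (C M τ : ℝ) (hτ : 0 ≤ τ)
    (hC : ∀ z, ‖G z‖ ≤ C * Real.exp (τ * ‖z‖)) (hM : ∀ x : ℝ, ‖G x‖ ≤ M)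
    (w : ℂ) (hw : 0 ≤ w.im) : ‖G w‖ ≤ M * Real.exp (τ * w.im) := by
  have hC0 : 0 ≤ C := by
    have := (norm_nonneg _).trans (hC 0)
    simpa using this
  set g : ℂ → E := fun z => Complex.exp (-(τ * z)) • G (Complex.I * z) with hg
  have hgn : ∀ z, ‖g z‖ = Real.exp (-(τ * z.re)) * ‖G (Complex.I * z)‖ := by
    intro z
    simp only [hg]
    rw [norm_smul, Complex.norm_exp]
    simp
  have hgd : Differentiable ℂ g := by
    simp only [hg]
    have : Differentiable ℂ (fun z : ℂ => G (Complex.I * z)) := hG.comp (by fun_prop)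
    exact Differentiable.smul (by fun_prop) this
  have key := PhragmenLindelof.right_half_plane_of_bounded_on_real (f := g) (C := M)
    (z := -Complex.I * w) hgd.diffContOnCl
    (by
      refine ⟨1, by norm_num, 2 * τ, ?_⟩
      refine Asymptotics.IsBigO.of_bound C ?_
      filter_upwards with z
      rw [hgn, Real.rpow_one, Real.norm_eq_abs, abs_of_pos (Real.exp_pos _)]
      have e1 := hC (Complex.I * z)
      rw [norm_mul, Complex.norm_I, one_mul] at e1
      have e2 : Real.exp (-(τ * z.re)) ≤ Real.exp (τ * ‖z‖) := by
        apply Real.exp_le_exp.2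
        have := neg_abs_le z.re
        have := Complex.abs_re_le_norm z
        nlinarith
      calc Real.exp (-(τ * z.re)) * ‖G (Complex.I * z)‖
          ≤ Real.exp (τ * ‖z‖) * (C * Real.exp (τ * ‖z‖)) := by gcongr
        _ = C * Real.exp (2 * τ * ‖z‖) := by
          rw [show 2 * τ * ‖z‖ = τ * ‖z‖ + τ * ‖z‖ by ring, Real.exp_add]; ring)
    (by
      refine ⟨C, ?_⟩
      rw [eventually_map]
      filter_upwards [eventually_ge_atTop 0] with x hx
      rw [hgn]
      have e1 := hC (Complex.I * x)
      rw [norm_mul, Complex.norm_I, one_mul, Complex.norm_real, Real.norm_eq_abs, abs_of_nonneg hx] at e1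
      rw [Complex.ofReal_re]
      calc Real.exp (-(τ * x)) * ‖G (Complex.I * x)‖
          ≤ Real.exp (-(τ * x)) * (C * Real.exp (τ * x)) := by gcongr
        _ = C := by rw [Real.exp_neg]; field_simp)
    (by
      intro x
      rw [hgn]
      have e : Complex.I * (x * Complex.I) = ((-x : ℝ) : ℂ) := by
        push_cast
        linear_combination (x : ℂ) * Complex.I_mul_I
      rw [e]
      simpa using hM (-x))
    (by simpa using hw)
  rw [hgn] at key
  have e : Complex.I * (-Complex.I * w) = w := by
    linear_combination (-w) * Complex.I_mul_I
  have e2 : (-Complex.I * w).re = w.im := by simp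
  rw [e, e2, Real.exp_neg, inv_mul_le_iff₀ (Real.exp_pos _)] at key
  linarith

theorem aux_pl {E : Type*} [NormedAddCommGroup E] [NormedSpace ℂ E]
    (G : ℂ → E) (hG : Differentiable ℂ G) (C M τ : ℝ) (hτ : 0 ≤ τ)
    (hC : ∀ z, ‖G z‖ ≤ C * Real.exp (τ * ‖z‖)) (hM : ∀ x : ℝ, ‖G x‖ ≤ M)
    (w : ℂ) : ‖G w‖ ≤ M * Real.exp (τ * |w.im|) := by
  rcases le_total 0 w.im with hw | hw
  · rw [abs_of_nonneg hw]
    exact aux_pl_upper G hG C M τ hτ hC hM w hw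
  · rw [abs_of_nonpos hw]
    have := aux_pl_upper (fun z => G (-z)) (hG.comp differentiable_neg) C M τ hτ
      (fun z => by simpa using hC (-z)) (fun x => by simpa using hM (-x)) (-w) (by simpa using hw)
    simpa using this

/-- The sharp vector-valued Bernstein-type estimate on a unit interval. -/
theorem aux_unit {E : Type*} [NormedAddCommGroup E] [NormedSpace ℂ E] [CompleteSpace E]
    (G : ℂ → E) (hG : Differentiable ℂ G) (C M τ : ℝ) (hτ : 0 < τ) (hτ2 : τ < Real.pi)
    (hC : ∀ z, ‖G z‖ ≤ C * Real.exp (τ * ‖z‖)) (hM : ∀ x : ℝ, ‖G x‖ ≤ M) :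
    ‖G 1 - G 0‖ ≤ 2 * Real.sin (τ / 2) * M := by
  have hpi := Real.pi_pos
  have hpl := aux_pl G hG C M τ hτ.le hC hM
  have hpc : (Real.pi : ℂ) ≠ 0 := by exact_mod_cast hpi.ne'
  have htc : (τ : ℂ) ≠ 0 := by exact_mod_cast hτ.ne'
  have key := aux_bern (τ / (2 * Real.pi)) (by positivity)
    (by rw [div_lt_div_iff₀ (by positivity) (by positivity)]; linarith)
    (fun z => G (((1 / 2 : ℝ) : ℂ) + ((Real.pi / τ : ℝ) : ℂ) * z)) (hG.comp (by fun_prop)) M M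
    (by
      intro z
      refine (hpl _).trans (le_of_eq ?_)
      congr 2
      rw [Complex.add_im, Complex.ofReal_im, Complex.im_ofReal_mul, zero_add, abs_mul,
        abs_of_pos (by positivity)]
      field_simp)
    (by
      intro x
      have := hM (1 / 2 + Real.pi / τ * x)
      rwa [Complex.ofReal_add, Complex.ofReal_mul] at this)
  have e1 : ((1 / 2 : ℝ) : ℂ) + ((Real.pi / τ : ℝ) : ℂ) * ((τ / (2 * Real.pi) : ℝ) : ℂ) = 1 := by
    push_cast
    field_simp
    norm_num
  have e2 : ((1 / 2 : ℝ) : ℂ) + ((Real.pi / τ : ℝ) : ℂ) * (-((τ / (2 * Real.pi) : ℝ) : ℂ)) = 0 := by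
    linear_combination (-1 : ℂ) * e1 + 2 * (by push_cast; ring : ((1 / 2 : ℝ) : ℂ) = 1 / 2)
  have e3 : Real.pi * (τ / (2 * Real.pi)) = τ / 2 := by field_simp
  simp only [e1, e2, e3] at key
  exact key

section

open Filter Topology

theorem aux_coeff (σ : ℝ) (hσ : 0 < σ) (f : ℂ → ℂ) (hf : Differentiable ℂ f)
    (M : ℝ) (hM0 : 0 ≤ M) (hgrowth : ∀ z : ℂ, ‖f z‖ ≤ M * Real.exp (σ * |z.im|)) (n : ℕ) (R : ℝ)
    (hR : 0 < R) :
    ‖((n.factorial : ℂ)⁻¹ * iteratedDeriv n f 0)‖ ≤ M * Real.exp (σ * R) / R ^ n := by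
  have := Complex.norm_iteratedDeriv_le_of_forall_mem_sphere_norm_le (c := 0) (f := f)
    (C := M * Real.exp (σ * R)) n hR hf.diffContOnCl (by
      intro z hz
      have hz' : ‖z‖ = R := by simpa using hz
      refine (hgrowth z).trans ?_
      have := Complex.abs_im_le_norm z
      rw [hz'] at this
      gcongr)
  rw [norm_mul, norm_inv, Complex.norm_natCast, inv_mul_le_iff₀ (by positivity)]
  rw [← mul_div_assoc]
  exact this

theorem aux_term {𝔸 : Type*} [NormedRing 𝔸] [NormedAlgebra ℂ 𝔸] [NormOneClass 𝔸]
    (σ : ℝ) (hσ : 0 < σ) (f : ℂ → ℂ) (hf : Differentiable ℂ f)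
    (M : ℝ) (hM0 : 0 ≤ M) (hgrowth : ∀ z : ℂ, ‖f z‖ ≤ M * Real.exp (σ * |z.im|)) (n : ℕ)
    (ρ q : ℝ) (hρ : 0 < ρ) (hq : 0 < q) (T : 𝔸) (hT : ‖T‖ ≤ ρ) :
    ‖((n.factorial : ℂ)⁻¹ * iteratedDeriv n f 0) • T ^ n‖ ≤ M * Real.exp (σ * (q * ρ)) * (q⁻¹) ^ n := by
  rw [norm_smul]
  have h1 := aux_coeff σ hσ f hf M hM0 hgrowth n (q * ρ) (by positivity)
  have h2 : ‖T ^ n‖ ≤ ρ ^ n := (norm_pow_le T n).trans (by gcongr)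
  calc _ ≤ (M * Real.exp (σ * (q * ρ)) / (q * ρ) ^ n) * ρ ^ n := by gcongr
    _ = _ := by rw [mul_pow, inv_pow]; field_simp

theorem aux_psum_norm {𝔸 : Type*} [NormedRing 𝔸] [NormedAlgebra ℂ 𝔸] [NormOneClass 𝔸]
    [CompleteSpace 𝔸]
    (σ : ℝ) (hσ : 0 < σ) (f : ℂ → ℂ) (hf : Differentiable ℂ f)
    (M : ℝ) (hM0 : 0 ≤ M) (hgrowth : ∀ z : ℂ, ‖f z‖ ≤ M * Real.exp (σ * |z.im|))
    (ρ q : ℝ) (hρ : 0 < ρ) (hq : 1 < q) (T : 𝔸) (hT : ‖T‖ ≤ ρ) :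
    Summable (fun n : ℕ => ((n.factorial : ℂ)⁻¹ * iteratedDeriv n f 0) • T ^ n) ∧
    ‖∑' n : ℕ, ((n.factorial : ℂ)⁻¹ * iteratedDeriv n f 0) • T ^ n‖ ≤
      M * (1 - q⁻¹)⁻¹ * Real.exp (σ * (q * ρ)) := by
  have hq1 : q⁻¹ < 1 := inv_lt_one_of_one_lt₀ hq
  have hs : HasSum (fun n : ℕ => M * Real.exp (σ * (q * ρ)) * (q⁻¹) ^ n)
      (M * Real.exp (σ * (q * ρ)) * (1 - q⁻¹)⁻¹) :=
    (hasSum_geometric_of_lt_one (by positivity) hq1).mul_left _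
  have hb := fun n => aux_term σ hσ f hf M hM0 hgrowth n ρ q hρ (by linarith) T hT
  refine ⟨Summable.of_norm_bounded hs.summable hb, ?_⟩
  refine (tsum_of_norm_bounded hs hb).trans (le_of_eq (by ring))

theorem aux_psum_diff {𝔸 : Type*} [NormedRing 𝔸] [NormedAlgebra ℂ 𝔸] [NormOneClass 𝔸]
    [CompleteSpace 𝔸]
    (σ : ℝ) (hσ : 0 < σ) (f : ℂ → ℂ) (hf : Differentiable ℂ f)
    (M : ℝ) (hM0 : 0 ≤ M) (hgrowth : ∀ z : ℂ, ‖f z‖ ≤ M * Real.exp (σ * |z.im|)) (B K : 𝔸) :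
    Differentiable ℂ (fun z : ℂ =>
      ∑' n : ℕ, ((n.factorial : ℂ)⁻¹ * iteratedDeriv n f 0) • (B + z • K) ^ n) := by
  intro z
  set r := ‖z‖ + 1
  have hr : 0 < r := by positivity
  have hs : Summable (fun n : ℕ => M * Real.exp (σ * (2 * (‖B‖ + 1 + r * ‖K‖))) * ((2 : ℝ)⁻¹) ^ n) :=
    (summable_geometric_of_lt_one (by norm_num) (by norm_num)).mul_left _
  have := Complex.differentiableOn_tsum_of_summable_norm
    (F := fun (n : ℕ) (z : ℂ) => ((n.factorial : ℂ)⁻¹ * iteratedDeriv n f 0) • (B + z • K) ^ n)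
    (U := Metric.ball 0 r) hs
    (by
      intro n
      apply Differentiable.differentiableOn
      fun_prop)
    Metric.isOpen_ball
    (by
      intro n w hw
      apply aux_term σ hσ f hf M hM0 hgrowth n _ 2 (by positivity) (by norm_num)
      have hw' : ‖w‖ < r := by simpa using hw
      calc ‖B + w • K‖ ≤ ‖B‖ + ‖w‖ * ‖K‖ := by
            refine (norm_add_le _ _).trans ?_
            rw [norm_smul]
        _ ≤ ‖B‖ + 1 + r * ‖K‖ := by
            have : ‖w‖ * ‖K‖ ≤ r * ‖K‖ := by gcongr
            linarith)
  refine this.differentiableAt (Metric.isOpen_ball.mem_nhds ?_)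
  simp [r]

theorem aux_cfc {𝔸 : Type*} [CStarAlgebra 𝔸] [NormOneClass 𝔸]
    (σ : ℝ) (hσ : 0 < σ) (f : ℂ → ℂ) (hf : Differentiable ℂ f)
    (M : ℝ) (hM0 : 0 ≤ M) (hgrowth : ∀ z : ℂ, ‖f z‖ ≤ M * Real.exp (σ * |z.im|)) (T : 𝔸)
    (hT : IsSelfAdjoint T) :
    cfc f T = ∑' n : ℕ, ((n.factorial : ℂ)⁻¹ * iteratedDeriv n f 0) • T ^ n := by
  have hTn : IsStarNormal T := hT.isStarNormal
  have h1 : Tendsto (fun N : ℕ => cfc (fun x : ℂ => ∑ n ∈ Finset.range N,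
      ((n.factorial : ℂ)⁻¹ * iteratedDeriv n f 0) * x ^ n) T) atTop (𝓝 (cfc f T)) := by
    refine tendsto_cfc_fun ?_ ?_
    · have hs : Summable (fun n : ℕ => M * Real.exp (σ * (2 * (‖T‖ + 1))) * ((2 : ℝ)⁻¹) ^ n) :=
        (summable_geometric_of_lt_one (by norm_num) (by norm_num)).mul_left _
      have := tendstoUniformlyOn_tsum_nat (s := spectrum ℂ T)
        (f := fun (n : ℕ) (x : ℂ) => ((n.factorial : ℂ)⁻¹ * iteratedDeriv n f 0) * x ^ n) hs
        (by
          intro n x hx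
          have hx' := spectrum.norm_le_norm_of_mem hx
          exact aux_term σ hσ f hf M hM0 hgrowth n (‖T‖ + 1) 2 (by positivity) (by norm_num) x
            (by linarith))
      refine this.congr_right ?_
      intro x _
      have := Complex.taylorSeries_eq_of_entire' (c := 0) (z := x) hf
      simpa using this
    · filter_upwards with N
      fun_prop
  have h2 : ∀ N : ℕ, cfc (fun x : ℂ => ∑ n ∈ Finset.range N,
      ((n.factorial : ℂ)⁻¹ * iteratedDeriv n f 0) * x ^ n) T =
      ∑ n ∈ Finset.range N, ((n.factorial : ℂ)⁻¹ * iteratedDeriv n f 0) • T ^ n := by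
    intro N
    have e : (fun x : ℂ => ∑ n ∈ Finset.range N,
        ((n.factorial : ℂ)⁻¹ * iteratedDeriv n f 0) * x ^ n) =
        ∑ n ∈ Finset.range N, fun x : ℂ => ((n.factorial : ℂ)⁻¹ * iteratedDeriv n f 0) * x ^ n := by
      funext x
      simp
    rw [e, cfc_sum (fun (n : ℕ) (x : ℂ) => ((n.factorial : ℂ)⁻¹ * iteratedDeriv n f 0) * x ^ n) T _
      (by intro n _; fun_prop)]
    refine Finset.sum_congr rfl fun n _ => ?_
    rw [cfc_const_mul _ _ _ (by fun_prop), cfc_pow_id T n (ha := hTn)]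
  simp only [h2] at h1
  have h3 := (aux_psum_norm σ hσ f hf M hM0 hgrowth (‖T‖ + 1) 2 (by positivity) (by norm_num) T
    (by linarith)).1.hasSum.tendsto_sum_nat
  exact tendsto_nhds_unique h1 h3

end


/-- Operator Bernstein inequality with constant 1: if `f` is an entire function,
bounded on the real line with supremum `M` and satisfying
`‖f z‖ ≤ M * exp (σ * |Im z|)` (i.e. `f ∈ 𝓔_σ ∩ L^∞(ℝ)`), then for all bounded
self-adjoint operators `A`, `B` on a complex Hilbert space,
`‖f(A) - f(B)‖ ≤ β (σ * ‖A - B‖) * M ≤ σ * M * ‖A - B‖`, where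
`β t = 2 sin (t/2)` for `0 ≤ t ≤ π` and `β t = 2` for `t > π`. -/
theorem stmt_0 {H : Type*} [NormedAddCommGroup H] [InnerProductSpace ℂ H] [CompleteSpace H]
    (σ : ℝ) (hσ : 0 < σ) (f : ℂ → ℂ) (hf : Differentiable ℂ f)
    (M : ℝ) (hM : IsLUB (Set.range fun x : ℝ => ‖f (x : ℂ)‖) M)
    (hgrowth : ∀ z : ℂ, ‖f z‖ ≤ M * Real.exp (σ * |z.im|))
    (β : ℝ → ℝ)
    (hβ₁ : ∀ t : ℝ, 0 ≤ t → t ≤ Real.pi → β t = 2 * Real.sin (t / 2))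
    (hβ₂ : ∀ t : ℝ, Real.pi < t → β t = 2)
    (A B : H →L[ℂ] H) (hA : IsSelfAdjoint A) (hB : IsSelfAdjoint B) :
    ‖cfc f A - cfc f B‖ ≤ β (σ * ‖A - B‖) * M ∧
      ‖cfc f A - cfc f B‖ ≤ σ * M * ‖A - B‖ := by
  have hpi := Real.pi_pos
  have hM' : ∀ x : ℝ, ‖f x‖ ≤ M := fun x => hM.1 ⟨x, rfl⟩
  have hM0 : 0 ≤ M := (norm_nonneg _).trans (hM' 0)
  have hcfcM : ∀ T : H →L[ℂ] H, IsSelfAdjoint T → ‖cfc f T‖ ≤ M := by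
    intro T hT
    refine norm_cfc_le hM0 ?_
    intro x hx
    rw [hT.mem_spectrum_eq_re hx]
    exact hM' _
  set τ := σ * ‖A - B‖ with hτ
  have hτ0 : 0 ≤ τ := by positivity
  have htriv : ‖cfc f A - cfc f B‖ ≤ 2 * M := by
    refine (norm_sub_le _ _).trans ?_
    linarith [hcfcM A hA, hcfcM B hB]
  have hsharp : τ < Real.pi → ‖cfc f A - cfc f B‖ ≤ 2 * Real.sin (τ / 2) * M := by
    intro hτπ
    rcases subsingleton_or_nontrivial H with hH | hH
    · have : cfc f A - cfc f B = 0 := by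
        ext x
        exact Subsingleton.elim _ _
      rw [this, norm_zero]
      have := Real.sin_nonneg_of_nonneg_of_le_pi (x := τ / 2) (by linarith) (by linarith)
      positivity
    have hlim : Filter.Tendsto (fun s : ℝ => 2 * Real.sin (s / 2) * M) (nhdsWithin τ (Set.Ioi τ))
        (nhds (2 * Real.sin (τ / 2) * M)) := by
      have : Continuous (fun s : ℝ => 2 * Real.sin (s / 2) * M) := by fun_prop
      exact (this.tendsto τ).mono_left nhdsWithin_le_nhds
    refine ge_of_tendsto hlim ?_
    filter_upwards [Ioo_mem_nhdsGT hτπ] with s hs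
    obtain ⟨hs1, hs2⟩ := hs
    set K := A - B with hK
    have hKs : IsSelfAdjoint K := hA.sub hB
    set G : ℂ → (H →L[ℂ] H) := fun z : ℂ =>
      ∑' n : ℕ, ((n.factorial : ℂ)⁻¹ * iteratedDeriv n f 0) • (B + z • K) ^ n with hG
    have hGd : Differentiable ℂ G := aux_psum_diff σ hσ f hf M hM0 hgrowth B K
    have hGr : ∀ x : ℝ, IsSelfAdjoint (B + (x : ℂ) • K) ∧ G x = cfc f (B + (x : ℂ) • K) := by
      intro x
      have hsa : IsSelfAdjoint (B + (x : ℂ) • K) := by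
        refine hB.add (IsSelfAdjoint.smul ?_ hKs)
        rw [isSelfAdjoint_iff]
        exact Complex.conj_ofReal x
      exact ⟨hsa, (aux_cfc σ hσ f hf M hM0 hgrowth _ hsa).symm⟩
    set q := 1 + (s - τ) / (τ + 1) with hq
    have hq1 : 1 < q := by
      have : 0 < (s - τ) / (τ + 1) := div_pos (by linarith) (by linarith)
      linarith
    have hqτ : q * τ ≤ s := by
      have e : (s - τ) / (τ + 1) * (τ + 1) = s - τ := div_mul_cancel₀ _ (by linarith)
      have : 0 < (s - τ) / (τ + 1) := div_pos (by linarith) (by linarith)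
      rw [hq]
      nlinarith
    have hGb : ∀ z, ‖G z‖ ≤ (M * (1 - q⁻¹)⁻¹ * Real.exp (σ * (q * (‖B‖ + 1)))) *
        Real.exp (s * ‖z‖) := by
      intro z
      have h1 := (aux_psum_norm σ hσ f hf M hM0 hgrowth (‖B‖ + 1 + ‖z‖ * ‖K‖) q (by positivity) hq1
        (B + z • K) (by
          refine (norm_add_le _ _).trans ?_
          rw [norm_smul]
          linarith)).2
      refine h1.trans ?_
      have hinv : 0 ≤ (1 - q⁻¹)⁻¹ := by
        have := inv_lt_one_of_one_lt₀ hq1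
        exact inv_nonneg.2 (by linarith)
      rw [mul_assoc (M * (1 - q⁻¹)⁻¹), ← Real.exp_add]
      have hle : σ * (q * (‖B‖ + 1 + ‖z‖ * ‖K‖)) ≤ σ * (q * (‖B‖ + 1)) + s * ‖z‖ := by
        have e : σ * (q * (‖B‖ + 1 + ‖z‖ * ‖K‖)) = σ * (q * (‖B‖ + 1)) + (q * τ) * ‖z‖ := by
          rw [hτ]; ring
        rw [e]
        gcongr
      gcongr
    have key := aux_unit G hGd _ M s (by linarith) hs2 hGb (fun x => by
      rw [(hGr x).2]
      exact hcfcM _ (hGr x).1)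
    have g1 : G 1 = cfc f A := by
      have := (hGr 1).2
      simpa [hK] using this
    have g0 : G 0 = cfc f B := by
      have := (hGr 0).2
      simpa using this
    rwa [g1, g0] at key
  have hfirst : ‖cfc f A - cfc f B‖ ≤ β τ * M := by
    rcases lt_trichotomy τ Real.pi with h | h | h
    · rw [hβ₁ τ hτ0 h.le]
      exact hsharp h
    · rw [hβ₁ τ hτ0 h.le, h, Real.sin_pi_div_two, mul_one]
      exact htriv
    · rw [hβ₂ τ h]
      exact htriv
  refine ⟨hfirst, hfirst.trans ?_⟩
  have hβle : β τ ≤ τ := by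
    rcases le_or_gt τ Real.pi with h | h
    · rw [hβ₁ τ hτ0 h]
      have := Real.sin_le (x := τ / 2) (by linarith)
      linarith
    · rw [hβ₂ τ h]
      linarith [Real.pi_gt_three]
  calc β τ * M ≤ τ * M := by gcongr
    _ = σ * M * ‖A - B‖ := by rw [hτ]; ring
end

section
/- Bernstein inequality for unitary operators: Let n be a positive integer and let c : ℤ → ℂ vanish outside {−n, …, n}, and put f(z) = Σ_{k=−n}^{n} c_k z^k (a trigonometric polynomial of degree at most n). Then for all unitary operators U and V on a complex Hilbert space, ‖Σ_{k=−n}^{n} c_k U^k − Σ_{k=−n}^{n} c_k V^k‖ ≤ n · (sup_{|z|=1} |f(z)|) · ‖U − V‖, where for negative k the power U^k means (U*)^{−k}. -/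
open Finset in
lemma riesz_exists (n : ℕ) (hn : 0 < n) : ∃ (ω : ℕ → Circle) (b : ℕ → ℂ),
    (∀ m : ℤ, |m| ≤ n → ∑ j ∈ range (2*n), b j * (ω j : ℂ)^m = -(m:ℂ)) ∧
    ∑ j ∈ range (2*n), ‖b j‖ ≤ n := by
  have hn0 : (n:ℂ) ≠ 0 := by exact_mod_cast hn.ne'
  set ζ : ℂ := Complex.exp (2 * Real.pi * Complex.I / ((2*n : ℕ):ℂ)) with hζ
  have hprim : IsPrimitiveRoot ζ (2*n) := Complex.isPrimitiveRoot_exp _ (by omega)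
  let ω : ℕ → Circle := fun j => Circle.exp (Real.pi * (2*j+1) / (2*n))
  have hω : ∀ j, (ω j : ℂ) = (ω 0 : ℂ) * ζ^j := by
    intro j
    simp only [ω, hζ, Circle.coe_exp, ← Complex.exp_nat_mul, ← Complex.exp_add]
    congr 1
    push_cast
    field_simp
    ring
  have hω2 : ∀ j, (ω j : ℂ)^(2*n) = -1 := by
    intro j
    simp only [ω, Circle.coe_exp, ← Complex.exp_nat_mul]
    rw [← Complex.exp_pi_mul_I, Complex.exp_eq_exp_iff_exists_int]
    refine ⟨j, ?_⟩
    push_cast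
    field_simp
    ring
  have horth : ∀ l : ℕ, ¬ (2*n ∣ l) → ∑ j ∈ range (2*n), (ω j : ℂ)^l = 0 := by
    intro l hl
    have h1 : ζ^l ≠ 1 := fun h => hl ((hprim.pow_eq_one_iff_dvd l).1 h)
    have h2 : ∑ j ∈ range (2*n), (ζ^l)^j = 0 := by
      rw [geom_sum_eq h1, ← pow_mul, mul_comm l, pow_mul, hprim.pow_eq_one]; simp
    calc ∑ j ∈ range (2*n), (ω j : ℂ)^l = ∑ j ∈ range (2*n), (ω 0 : ℂ)^l * (ζ^l)^j := by
          refine sum_congr rfl fun j _ => ?_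
          rw [hω j, mul_pow, ← pow_mul, ← pow_mul, mul_comm l]
      _ = 0 := by rw [← mul_sum, h2, mul_zero]
  let S : ℕ → ℂ := fun j => ∑ p ∈ range (2*n), ((n:ℂ) - p) * (ω j : ℂ)^p
  have hSval : ∀ j, S j = ((‖S j‖ : ℝ) : ℂ) := by
    intro j
    set w : ℂ := (ω j : ℂ) with hw
    have hw1 : w ≠ 1 := by
      intro h
      have := hω2 j
      rw [← hw, h] at this
      norm_num at this
    have hw0 : w ≠ 0 := Circle.coe_ne_zero _
    have e : ∀ N : ℕ, (1 - w)^2 * ∑ p ∈ range N, ((n:ℂ) - p) * w^p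
        = n*(1-w) - w + w^N * (-(n:ℂ)*(1-w) + N*(1-w) + w) := by
      intro N
      induction N with
      | zero => simp
      | succ N ih => rw [sum_range_succ, mul_add, ih]; push_cast; ring
    have e2 := e (2*n)
    rw [hω2 j] at e2
    have e3 : (1-w)^2 * S j = -2*w := by
      rw [show S j = ∑ p ∈ range (2*n), ((n:ℂ) - p) * w^p from rfl, e2]; push_cast; ring
    have hc : w * (starRingEnd ℂ) w = 1 := by
      rw [Complex.mul_conj, hw]; simp [Circle.normSq_coe]
    have e4 : ((‖1-w‖^2 : ℝ) : ℂ) * S j = 2 := by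
      have : ((‖1-w‖^2 : ℝ) : ℂ) = (1-w) * (1 - (starRingEnd ℂ) w) := by
        rw [← Complex.normSq_eq_norm_sq, ← Complex.mul_conj]; simp
      rw [this]
      apply mul_left_cancel₀ hw0
      linear_combination (-1 : ℂ) * e3 - (1-w) * S j * hc
    have hpos : (0:ℝ) < ‖1-w‖^2 := by
      have : 0 < ‖1-w‖ := norm_pos_iff.2 (sub_ne_zero.2 hw1.symm)
      positivity
    have e5 : S j = ((2 / ‖1-w‖^2 : ℝ) : ℂ) := by
      have : ((‖1-w‖^2 : ℝ) : ℂ) ≠ 0 := by exact_mod_cast hpos.ne'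
      rw [Complex.ofReal_div, eq_div_iff this, mul_comm, e4]; simp
    rw [e5, Complex.norm_real, Real.norm_of_nonneg (by positivity)]
  refine ⟨ω, fun j => (ω j : ℂ)^n * S j / (2*n), ?_, ?_⟩
  · intro m hm
    obtain ⟨q, hq⟩ : ∃ q : ℕ, (q:ℤ) = n + m := ⟨(n+m).toNat, by
      rw [abs_le] at hm; omega⟩
    have hq2 : q ≤ 2*n := by rw [abs_le] at hm; omega
    have hm' : (m:ℂ) = q - n := by
      have : m = q - n := by omega
      rw [this]; push_cast; ring
    have h1 : ∀ j, (ω j : ℂ)^n * S j / (2*n) * (ω j : ℂ)^m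
        = (∑ p ∈ range (2*n), ((n:ℂ) - p) * (ω j : ℂ)^(q+p)) / (2*n) := by
      intro j
      have : (ω j : ℂ)^n * (ω j : ℂ)^m = (ω j : ℂ)^q := by
        rw [← zpow_natCast, ← zpow_natCast, hq, zpow_add₀ (Circle.coe_ne_zero _)]
      simp only [S]
      rw [show ∀ a b c d : ℂ, a * b / c * d = (a*d) * b / c by intros; ring, this, mul_sum]
      congr 1
      refine sum_congr rfl fun p _ => ?_
      rw [pow_add]; ring
    simp only [h1]
    rw [← sum_div, sum_comm]
    simp only [← mul_sum]
    rw [div_eq_iff (by simpa using hn0)]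
    rcases Nat.eq_zero_or_pos q with h0 | h0
    · subst h0
      rw [sum_eq_single 0]
      · simp [hm']
      · intro p hp hp0
        rw [horth, mul_zero]
        intro h
        have := Nat.le_of_dvd (by omega) h
        simp at hp; omega
      · intro h; exact absurd (by simp; omega) h
    · rw [sum_eq_single (2*n - q)]
      · rw [show q + (2*n-q) = 2*n by omega]
        simp only [hω2]
        rw [Nat.cast_sub hq2, hm']
        simp; ring
      · intro p hp hp0
        rw [horth, mul_zero]
        rintro ⟨t, ht⟩
        simp at hp
        have : t < 2 := by
          by_contra hcon
          have : 2*n*2 ≤ 2*n*t := Nat.mul_le_mul_left _ (by omega)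
          omega
        interval_cases t <;> omega
      · intro h; exact absurd (by simp; omega) h
  · have hb : ∀ j, ‖(ω j : ℂ)^n * S j / (2*n)‖ = ‖S j‖ / (2*n) := by
      intro j; rw [norm_div, norm_mul, norm_pow, Circle.norm_coe]; simp
    simp only [hb]
    rw [← sum_div]
    have : ((∑ j ∈ range (2*n), ‖S j‖ : ℝ) : ℂ) = n * (2*n) := by
      rw [Complex.ofReal_sum]
      simp only [← hSval]
      simp only [S]
      rw [sum_comm]
      simp only [← mul_sum]
      rw [sum_eq_single 0]
      · simp
      · intro p hp hp0
        rw [horth, mul_zero]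
        intro h
        have := Nat.le_of_dvd (by omega) h
        simp at hp; omega
      · intro h; exact absurd (by simp; omega) h
    have h3 : (∑ j ∈ range (2*n), ‖S j‖ : ℝ) = n * (2*n) := by exact_mod_cast this
    rw [h3]
    have : (n:ℝ) ≠ 0 := by exact_mod_cast hn.ne'
    field_simp
    exact le_rfl

lemma vonNeumann_bound {A : Type*} [CStarAlgebra A] (s : Finset ℤ) (c : ℤ → ℂ)
    (u : unitary A) (C : ℝ) (hC : 0 ≤ C) (h : ∀ z : ℂ, ‖z‖ = 1 → ‖∑ k ∈ s, c k * z^k‖ ≤ C) :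
    ‖∑ k ∈ s, c k • ((u^k : unitary A) : A)‖ ≤ C := by
  have hsp : ∀ z ∈ spectrum ℂ (u : A), ‖z‖ = 1 := by
    intro z hz
    simpa using Unitary.spectrum_subset_circle u hz
  have hcont : ∀ k : ℤ, ContinuousOn (fun z : ℂ => z^k) (spectrum ℂ (u:A)) := by
    intro k z hz
    refine (continuousAt_zpow₀ z k (Or.inl ?_)).continuousWithinAt
    rintro rfl
    simpa using hsp 0 hz
  have hcont2 : ∀ k : ℤ, ContinuousOn (fun z : ℂ => c k * z^k) (spectrum ℂ (u:A)) :=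
    fun k => continuousOn_const.mul (hcont k)
  have key : cfc (∑ k ∈ s, fun z : ℂ => c k * z^k) (u:A) = ∑ k ∈ s, c k • ((u^k : unitary A) : A) := by
    rw [cfc_sum _ _ _ (fun k _ => hcont2 k)]
    refine Finset.sum_congr rfl fun k _ => ?_
    rw [cfc_const_mul _ _ _ (hcont k)]
    congr 1
    have := cfc_zpow (R := ℂ) (Unitary.toUnits u) k (ha := by
      change IsStarNormal (u:A); infer_instance)
    rw [← map_zpow] at this
    exact this
  rw [← key]
  refine norm_cfc_le hC fun z hz => ?_
  simpa using h z (hsp z hz)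

inductive Trig {M : Type*} [Ring M] [Algebra ℂ M] (N : ℕ) : (Circle → M) → M → M → Prop
  | mono (m : ℤ) (hm : |m| ≤ N) (a : M) : Trig N (fun z => (z:ℂ)^m • a) a ((m:ℂ) • a)
  | add {g v d g' v' d'} : Trig N g v d → Trig N g' v' d' → Trig N (g+g') (v+v') (d+d')

namespace Trig
variable {M : Type*} [Ring M] [Algebra ℂ M]

lemma le {N N' : ℕ} (h : N ≤ N') {g : Circle → M} {v d} (t : Trig N g v d) : Trig N' g v d := by
  induction t with
  | mono m hm a => exact .mono m (by omega) a
  | add _ _ h1 h2 => exact .add h1 h2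

lemma smul {N : ℕ} (c : ℂ) {g : Circle → M} {v d} (t : Trig N g v d) :
    Trig N (c • g) (c • v) (c • d) := by
  induction t with
  | mono m hm a =>
    have := Trig.mono m hm (c • a)
    convert this using 1
    · ext z; simp only [Pi.smul_apply]; rw [smul_comm]
    · rw [smul_comm]
  | add _ _ h1 h2 => simpa [smul_add] using Trig.add h1 h2

lemma zero {N : ℕ} : Trig N (0 : Circle → M) 0 0 := by
  have := Trig.mono (M := M) (N := N) 0 (by simp) 0
  convert this using 1
  · ext z; simp
  · simp

lemma sum {ι : Type*} {N : ℕ} (s : Finset ι) {g : ι → Circle → M} {v d : ι → M}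
    (h : ∀ i ∈ s, Trig N (g i) (v i) (d i)) :
    Trig N (∑ i ∈ s, g i) (∑ i ∈ s, v i) (∑ i ∈ s, d i) := by
  classical
  induction s using Finset.induction_on with
  | empty => simpa using zero
  | insert a s ha ih =>
    rw [Finset.sum_insert ha, Finset.sum_insert ha, Finset.sum_insert ha]
    exact .add (h a (by simp)) (ih fun i hi => h i (by simp [hi]))

lemma step {N : ℕ} {g : Circle → M} {v d} (t : Trig N g v d) (A B : M) :
    Trig (N+1) (fun z => g z * ((z:ℂ) • A + (z:ℂ)⁻¹ • B)) (v*(A+B)) (d*(A+B)+v*(A-B)) := by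
  induction t with
  | mono m hm a =>
    rw [abs_le] at hm
    have h1 := Trig.mono (N := N+1) (m+1) (by rw [abs_le]; push_cast; omega) (a*A)
    have h2 := Trig.mono (N := N+1) (m-1) (by rw [abs_le]; push_cast; omega) (a*B)
    convert Trig.add h1 h2 using 1
    · ext z
      simp [mul_add, smul_smul, zpow_add₀ (Circle.coe_ne_zero z), zpow_sub₀ (Circle.coe_ne_zero z)]
      simp only [div_eq_mul_inv, mul_comm]
    · rw [mul_add]
    · simp only [mul_add, mul_sub, smul_mul_assoc]; push_cast; module
  | add _ _ h1 h2 =>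
    convert Trig.add h1 h2 using 1
    · ext z; simp [add_mul]
    · rw [add_mul]
    · simp only [add_mul]; abel

lemma riesz {n : ℕ} {g : Circle → M} {v d} (t : Trig n g v d) {ω : ℕ → Circle} {b : ℕ → ℂ}
    {s : Finset ℕ} (h : ∀ m : ℤ, |m| ≤ n → ∑ j ∈ s, b j * (ω j : ℂ)^m = -(m:ℂ)) :
    ∑ j ∈ s, b j • g (ω j) = -d := by
  induction t with
  | mono m hm a => simp only [smul_smul]; rw [← Finset.sum_smul, h m hm, neg_smul]
  | add _ _ h1 h2 => simp only [Pi.add_apply, smul_add, Finset.sum_add_distrib, h1, h2]; abel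

end Trig

lemma bern_abstract {M : Type*} [CStarAlgebra M] (n : ℕ) (hn : 0 < n) (c : ℤ → ℂ)
    (C : ℝ) (hC : 0 ≤ C)
    (hf : ∀ z : ℂ, ‖z‖ = 1 → ‖∑ k ∈ Finset.Icc (-(n : ℤ)) (n : ℤ), c k * z^k‖ ≤ C)
    (W : unitary M) (K : M) (hK : star K = K) (hKK : K * K = 1)
    (P : ℤ → M → Prop) (h0 : P 0 0)
    (hs : ∀ k d, P k d → P (k+1) (d * W + ((W^k : unitary M) : M) * (W * K)))
    (hp : ∀ k d, P k d → P (k-1) (d * star (W:M) - ((W^k : unitary M) : M) * (K * star (W:M)))) :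
    ∃ E : ℤ → M, (∀ k, P k (E k)) ∧
      ‖∑ k ∈ Finset.Icc (-(n : ℤ)) (n : ℤ), c k • E k‖ ≤ n * C := by
  set P1 : M := (1/2 : ℂ) • (1 + K) with hP1
  set P2 : M := (1/2 : ℂ) • (1 - K) with hP2
  have s1 : star P1 = P1 := by simp [hP1, hK]
  have s2 : star P2 = P2 := by simp [hP2, hK]
  have e11 : P1 * P1 = P1 := by
    simp only [hP1, smul_mul_smul_comm, mul_add, add_mul, hKK, one_mul, mul_one]; module
  have e22 : P2 * P2 = P2 := by
    simp only [hP2, smul_mul_smul_comm, mul_sub, sub_mul, hKK, one_mul, mul_one]; module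
  have e12 : P1 * P2 = 0 := by
    simp only [hP1, hP2, smul_mul_smul_comm, mul_sub, add_mul, hKK, one_mul, mul_one]; module
  have e21 : P2 * P1 = 0 := by
    simp only [hP1, hP2, smul_mul_smul_comm, mul_add, sub_mul, hKK, one_mul, mul_one]; module
  have a12 : P1 + P2 = 1 := by simp only [hP1, hP2]; module
  have d12 : P1 - P2 = K := by simp only [hP1, hP2]; module
  clear_value P1 P2
  have hstar : ∀ z : Circle, star ((z:ℂ) • P1 + (z:ℂ)⁻¹ • P2) = (z:ℂ)⁻¹ • P1 + (z:ℂ) • P2 := by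
    intro z
    have hz : star (z:ℂ) = (z:ℂ)⁻¹ := by
      rw [← Circle.coe_inv, Circle.coe_inv_eq_conj]; rfl
    rw [star_add, star_smul, star_smul, s1, s2, star_inv₀, hz, inv_inv]
  have hQ : ∀ z : Circle, (z:ℂ) • P1 + (z:ℂ)⁻¹ • P2 ∈ unitary M := by
    intro z
    have hz0 : (z:ℂ) ≠ 0 := Circle.coe_ne_zero z
    rw [Unitary.mem_iff, hstar]
    constructor <;>
    simp [mul_add, add_mul, smul_smul, e11, e12, e21, e22, hz0, a12]
  let Q : Circle → unitary M := fun z => ⟨_, hQ z⟩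
  have hQv : ∀ z, (Q z : M) = (z:ℂ) • P1 + (z:ℂ)⁻¹ • P2 := fun z => rfl
  have hex : ∀ k : ℤ, ∃ d, P k d ∧ Trig k.natAbs
      (fun z => (((W * Q z)^k : unitary M) : M)) ((W^k : unitary M) : M) d := by
    intro k
    induction k using Int.induction_on with
    | zero =>
      refine ⟨0, h0, ?_⟩
      rw [Int.natAbs_zero, zpow_zero, OneMemClass.coe_one]
      have := Trig.mono (M := M) (N := 0) 0 (by simp) 1
      convert this using 1
      · funext z; simp
      · simp
    | succ i ih =>
      obtain ⟨d, hd, ht⟩ := ih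
      refine ⟨_, hs _ _ hd, ?_⟩
      have hN : ((i:ℤ) + 1).natAbs = (i:ℤ).natAbs + 1 := by omega
      rw [hN]
      convert ht.step (W * P1) (W * P2) using 1
      · funext z
        rw [zpow_add, zpow_one]
        simp only [Submonoid.coe_mul, hQv, mul_add, mul_smul_comm]
      · rw [zpow_add, zpow_one, Submonoid.coe_mul, ← mul_add, a12, mul_one]
      · rw [← mul_add, ← mul_sub, a12, d12, mul_one]
    | pred i ih =>
      obtain ⟨d, hd, ht⟩ := ih
      refine ⟨_, hp _ _ hd, ?_⟩
      have hN : (-(i:ℤ) - 1).natAbs = (-(i:ℤ)).natAbs + 1 := by omega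
      rw [hN]
      convert ht.step (P2 * star (W:M)) (P1 * star (W:M)) using 1
      · funext z
        rw [zpow_sub, zpow_one, mul_inv_rev]
        simp only [Submonoid.coe_mul, ← Unitary.star_eq_inv, Unitary.coe_star, hQv, hstar, add_mul, 
          smul_mul_assoc]
        rw [add_comm]
      · rw [zpow_sub, zpow_one, Submonoid.coe_mul, ← add_mul, add_comm P2, a12, one_mul,
          ← Unitary.star_eq_inv, Unitary.coe_star]
      · rw [← add_mul, ← sub_mul, add_comm P2, a12, one_mul, ← neg_sub P1 P2, d12, neg_mul, mul_neg,
          sub_eq_add_neg]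
  choose E hPE hTE using hex
  refine ⟨E, hPE, ?_⟩
  have hT := Trig.sum (N := n) (Finset.Icc (-(n : ℤ)) (n : ℤ)) (fun k hk =>
    ((hTE k).le (by rw [Finset.mem_Icc] at hk; omega)).smul (c k))
  obtain ⟨ω, b, hb, hbn⟩ := riesz_exists n hn
  have hR := hT.riesz hb
  rw [← norm_neg, ← hR]
  calc _ ≤ ∑ j ∈ Finset.range (2*n), ‖b j‖ * C := by
        refine norm_sum_le_of_le _ fun j _ => ?_
        rw [norm_smul]
        refine mul_le_mul_of_nonneg_left ?_ (norm_nonneg _)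
        have := vonNeumann_bound _ c (W * Q (ω j)) C hC hf
        simpa [Finset.sum_apply] using this
    _ = (∑ j ∈ Finset.range (2*n), ‖b j‖) * C := by rw [Finset.sum_mul]
    _ ≤ n * C := mul_le_mul_of_nonneg_right hbn hC

lemma dilation_sq {A : Type*} [Ring A] (T T' S : A) (h1 : S * S = 1 - T' * T)
    (h2 : S * T = T * S) (h3 : S * T' = T' * S) (h4 : T' * T = T * T') :
    (!![0, 0, T, S; 0, 0, S, -T'; T', S, 0, 0; S, -T, 0, 0] : Matrix (Fin 4) (Fin 4) A) *
      !![0, 0, T, S; 0, 0, S, -T'; T', S, 0, 0; S, -T, 0, 0] = 1 := by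
  ext i j
  fin_cases i <;> fin_cases j <;>
    simp [Matrix.mul_apply, Fin.sum_univ_four, h1, h2, h3, h4]

lemma dilation_star {A : Type*} [Ring A] [StarRing A] (T S : A) (h1 : star S = S) :
    (!![0, 0, T, S; 0, 0, S, -star T; star T, S, 0, 0; S, -T, 0, 0] :
      Matrix (Fin 4) (Fin 4) A).conjTranspose =
      !![0, 0, T, S; 0, 0, S, -star T; star T, S, 0, 0; S, -T, 0, 0] := by
  ext i j
  fin_cases i <;> fin_cases j <;> simp [Matrix.conjTranspose_apply, h1]

set_option maxHeartbeats 1000000 in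
lemma bern_cstar {A : Type*} [CStarAlgebra A] [PartialOrder A] [StarOrderedRing A]
    (n : ℕ) (hn : 0 < n) (c : ℤ → ℂ) (C : ℝ) (hC : 0 ≤ C)
    (hf : ∀ z : ℂ, ‖z‖ = 1 → ‖∑ k ∈ Finset.Icc (-(n : ℤ)) (n : ℤ), c k * z^k‖ ≤ C)
    (U V : unitary A) :
    ‖(∑ k ∈ Finset.Icc (-(n : ℤ)) (n : ℤ), c k • ((U ^ k : unitary A) : A)) -
      (∑ k ∈ Finset.Icc (-(n : ℤ)) (n : ℤ), c k • ((V ^ k : unitary A) : A))‖ ≤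
      n * C * ‖(U:A) - (V:A)‖ := by
  rcases eq_or_ne U V with rfl | hUV
  · simp
  set σ : ℝ := ‖(U:A) - (V:A)‖ with hσ
  have hσ0 : 0 < σ := norm_pos_iff.2 (sub_ne_zero.2 fun h => hUV (Subtype.ext h))
  have hσC : (σ:ℂ) ≠ 0 := by exact_mod_cast hσ0.ne'
  have uu : star (U:A) * U = 1 := Unitary.coe_star_mul_self U
  have uu' : (U:A) * star (U:A) = 1 := Unitary.coe_mul_star_self U
  have vv : star (V:A) * V = 1 := Unitary.coe_star_mul_self V
  have vv' : (V:A) * star (V:A) = 1 := Unitary.coe_mul_star_self V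
  set T : A := (σ:ℂ)⁻¹ • (1 - star (U:A) * V) with hT
  have hTs : star T = (σ:ℂ)⁻¹ • (1 - star (V:A) * U) := by
    simp [hT, star_smul]
  have hUT : (U:A) * T = (σ:ℂ)⁻¹ • ((U:A) - V) := by
    rw [hT, mul_smul_comm, mul_sub, ← mul_assoc, uu', mul_one, one_mul]
  have hTV : T * star (V:A) = (σ:ℂ)⁻¹ • (star (V:A) - star (U:A)) := by
    rw [hT, smul_mul_assoc, sub_mul, mul_assoc, vv', mul_one, one_mul]
  have x1 : star (U:A) * V * (star (V:A) * U) = 1 := by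
    rw [mul_assoc, ← mul_assoc (V:A), vv', one_mul, uu]
  have x2 : star (V:A) * U * (star (U:A) * V) = 1 := by
    rw [mul_assoc, ← mul_assoc (U:A), uu', one_mul, vv]
  have hnormal : star T * T = T * star T := by
    rw [hTs, hT]
    simp only [smul_mul_smul_comm, mul_sub, sub_mul, one_mul, mul_one, x1, x2]
    congr 1; abel
  have hTn : ‖T‖ = 1 := by
    have : ‖T‖ = ‖(U:A) * T‖ := by simp
    rw [this, hUT, norm_smul, ← hσ, norm_inv, Complex.norm_real, Real.norm_of_nonneg hσ0.le]
    exact inv_mul_cancel₀ hσ0.ne'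
  have hpos : 0 ≤ 1 - star T * T := by
    rw [sub_nonneg]
    have h1 : ‖star T * T‖ ≤ 1 := by rw [CStarRing.norm_star_mul_self, hTn]; norm_num
    exact (CStarAlgebra.norm_le_one_iff_of_nonneg _ (star_mul_self_nonneg T)).1 h1
  set S : A := CFC.sqrt (1 - star T * T) with hS
  have hSS : S * S = 1 - star T * T := CFC.sqrt_mul_sqrt_self _ hpos
  have hSstar : star S = S := (IsSelfAdjoint.of_nonneg (CFC.sqrt_nonneg _)).star_eq
  have hST : S * T = T * S := by
    have : Commute (1 - star T * T) T := by
      refine Commute.sub_left (Commute.one_left T) ?_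
      change star T * T * T = T * (star T * T)
      rw [hnormal, mul_assoc, hnormal]
    rw [hS, CFC.sqrt_eq_cfc]
    exact (this.cfc_nnreal _).eq
  have hSTs : S * star T = star T * S := by
    have := congrArg star hST
    rw [star_mul, star_mul, hSstar] at this
    exact this.symm
  let K : CStarMatrix (Fin 4) (Fin 4) A := CStarMatrix.ofMatrix
    !![0, 0, T, S; 0, 0, S, -star T; star T, S, 0, 0; S, -T, 0, 0]
  let w : Fin 4 → unitary A := ![U, U, V, V]
  have hdiag : ∀ x y : Fin 4 → A, (CStarMatrix.ofMatrix (Matrix.diagonal x) * CStarMatrix.ofMatrix (Matrix.diagonal y) : CStarMatrix (Fin 4) (Fin 4) A) = CStarMatrix.ofMatrix (Matrix.diagonal (fun i => x i * y i)) := fun x y => Matrix.diagonal_mul_diagonal x y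
  have hdiagstar : ∀ x : Fin 4 → A, star (CStarMatrix.ofMatrix (Matrix.diagonal x) : CStarMatrix (Fin 4) (Fin 4) A) = CStarMatrix.ofMatrix (Matrix.diagonal (fun i => star (x i))) := fun x => Matrix.diagonal_conjTranspose x
  have hdiag1 : (CStarMatrix.ofMatrix (Matrix.diagonal (fun _ => 1)) : CStarMatrix (Fin 4) (Fin 4) A) = 1 := Matrix.diagonal_one
  let D : (Fin 4 → unitary A) →* unitary (CStarMatrix (Fin 4) (Fin 4) A) :=
    { toFun := fun x => ⟨CStarMatrix.ofMatrix (Matrix.diagonal fun i => (x i : A)), by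
        rw [Unitary.mem_iff, hdiagstar, hdiag, hdiag, ← hdiag1]
        simp⟩
      map_one' := Subtype.ext (by simpa using hdiag1)
      map_mul' := fun x y => Subtype.ext (by simp [hdiag]) }
  have hD : ∀ x, ((D x : unitary (CStarMatrix (Fin 4) (Fin 4) A)) : CStarMatrix (Fin 4) (Fin 4) A) = CStarMatrix.ofMatrix (Matrix.diagonal fun i => (x i : A)) := fun x => rfl
  have hmulr : ∀ (X : CStarMatrix (Fin 4) (Fin 4) A) (x : Fin 4 → A) i j,
      (X * CStarMatrix.ofMatrix (Matrix.diagonal x)) i j = X i j * x j :=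
    fun X x i j => Matrix.mul_diagonal x X i j
  have hmull : ∀ (X : CStarMatrix (Fin 4) (Fin 4) A) (x : Fin 4 → A) i j,
      (CStarMatrix.ofMatrix (Matrix.diagonal x) * X) i j = x i * X i j :=
    fun X x i j => Matrix.diagonal_mul x X i j
  have hKstar : star K = K := dilation_star T S hSstar
  have hKK : K * K = 1 := dilation_sq T (star T) S hSS hST hSTs hnormal
  obtain ⟨E, hE, hbd⟩ := bern_abstract n hn c C hC hf (D w) K hKstar hKK
    (fun k d => d 0 2 = (σ:ℂ)⁻¹ • (((U^k : unitary A) : A) - ((V^k : unitary A) : A)))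
    (by simp)
    (by
      intro k d hd
      rw [← map_zpow, hD, hD, CStarMatrix.add_apply, hmulr, hmull, hmull, hd]
      have h1 : K 0 2 = T := rfl
      have h2 : w 0 = U := rfl
      have h3 : w 2 = V := rfl
      rw [h1, Pi.pow_apply, h2, h3, hUT, zpow_add, zpow_add, zpow_one, zpow_one]
      simp only [Submonoid.coe_mul, smul_mul_assoc, mul_smul_comm, ← smul_add]
      congr 1
      noncomm_ring)
    (by
      intro k d hd
      rw [← map_zpow, hD, hD, hdiagstar, CStarMatrix.sub_apply, hmulr, hmull, hmulr, hd]
      have h1 : K 0 2 = T := rfl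
      have h2 : w 0 = U := rfl
      have h3 : w 2 = V := rfl
      rw [h1, Pi.pow_apply, h2, h3, hTV, zpow_sub, zpow_sub, zpow_one, zpow_one]
      simp only [Submonoid.coe_mul, smul_mul_assoc, mul_smul_comm, ← smul_sub,
        ← Unitary.star_eq_inv, Unitary.coe_star]
      congr 1
      noncomm_ring)
  have hent : (∑ k ∈ Finset.Icc (-(n : ℤ)) (n : ℤ), c k • E k) 0 2 = (σ:ℂ)⁻¹ •
      ((∑ k ∈ Finset.Icc (-(n : ℤ)) (n : ℤ), c k • ((U ^ k : unitary A) : A)) -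
      (∑ k ∈ Finset.Icc (-(n : ℤ)) (n : ℤ), c k • ((V ^ k : unitary A) : A))) := by
    let φ : CStarMatrix (Fin 4) (Fin 4) A →+ A :=
      { toFun := fun X => X 0 2, map_zero' := rfl, map_add' := fun _ _ => rfl }
    have hφ : ∀ X, φ X = X 0 2 := fun _ => rfl
    refine (hφ _).symm.trans ?_
    rw [map_sum, ← Finset.sum_sub_distrib, Finset.smul_sum]
    refine Finset.sum_congr rfl fun k _ => ?_
    change c k • E k 0 2 = _
    rw [hE k, smul_comm, smul_sub (c k)]
  have hfin := (CStarMatrix.norm_entry_le_norm (i := 0) (j := 2)).trans hbd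
  rw [hent, norm_smul, norm_inv, Complex.norm_real, Real.norm_of_nonneg hσ0.le,
    inv_mul_le_iff₀ hσ0] at hfin
  rw [mul_comm (_ * C)]
  exact hfin


/-- Bernstein inequality for unitary operators: if `f(z) = ∑_{k=-n}^n c k * z^k`
is a trigonometric polynomial of degree at most `n`, then for all unitary
operators `U`, `V` on a complex Hilbert space,
`‖f(U) - f(V)‖ ≤ n * (sup_{|z|=1} |f z|) * ‖U - V‖`, where `U^k` for negative
`k` means `(U*)^(-k)` (the integer power in the unitary group). -/
theorem stmt_1 {H : Type*} [NormedAddCommGroup H] [InnerProductSpace ℂ H] [CompleteSpace H]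
    (n : ℕ) (hn : 0 < n) (c : ℤ → ℂ)
    (hc : ∀ k : ℤ, k ∉ Finset.Icc (-(n : ℤ)) (n : ℤ) → c k = 0)
    (U V : unitary (H →L[ℂ] H)) :
    ‖(∑ k ∈ Finset.Icc (-(n : ℤ)) (n : ℤ),
        c k • ((U ^ k : unitary (H →L[ℂ] H)) : H →L[ℂ] H)) -
      (∑ k ∈ Finset.Icc (-(n : ℤ)) (n : ℤ),
        c k • ((V ^ k : unitary (H →L[ℂ] H)) : H →L[ℂ] H))‖ ≤
      (n : ℝ) *
        sSup ((fun z : ℂ => ‖∑ k ∈ Finset.Icc (-(n : ℤ)) (n : ℤ), c k * z ^ k‖) ''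
          {z : ℂ | ‖z‖ = 1}) *
        ‖(U : H →L[ℂ] H) - (V : H →L[ℂ] H)‖ := by
  have hbdd : BddAbove ((fun z : ℂ => ‖∑ k ∈ Finset.Icc (-(n : ℤ)) (n : ℤ), c k * z ^ k‖) ''
          {z : ℂ | ‖z‖ = 1}) := by
    refine ⟨∑ k ∈ Finset.Icc (-(n : ℤ)) (n : ℤ), ‖c k‖, ?_⟩
    rintro _ ⟨z, hz, rfl⟩
    refine norm_sum_le_of_le _ fun k _ => ?_
    have hz' : ‖z‖ = 1 := hz
    simp [hz']
  exact bern_cstar n hn c _ (Real.sSup_nonneg (by rintro _ ⟨z, _, rfl⟩; exact norm_nonneg _))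
    (fun z hz => le_csSup hbdd ⟨z, hz, rfl⟩) U V
end

section
/- A primitive of the Fourier transform of a complex measure is operator Lipschitz with constant the total mass: Let ν be a finite positive Borel measure on ℝ and ρ : ℝ → ℂ a Borel measurable function with |ρ(s)| ≤ 1 for all s (so that μ = ρ·ν is a complex Borel measure of total variation at most ν(ℝ)). Let f : ℝ → ℂ satisfy f(x) = f(0) + ∫₀ˣ ( ∫_ℝ e^{−i·s·t}·ρ(s) dν(s) ) dt for every x ∈ ℝ, i.e. f is a primitive of the Fourier transform of μ. Then for all bounded self-adjoint operators A and B on a complex Hilbert space, ‖f(A) − f(B)‖ ≤ ν(ℝ)·‖A − B‖. -/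
open MeasureTheory

/-- `‖exp X - exp Y‖ ≤ ‖X - Y‖` for skew-adjoint operators. -/
lemma norm_exp_sub_exp_le_skew {H : Type*} [NormedAddCommGroup H] [InnerProductSpace ℂ H]
    [CompleteSpace H] (X Y : H →L[ℂ] H) (hX : X ∈ skewAdjoint (H →L[ℂ] H))
    (hY : Y ∈ skewAdjoint (H →L[ℂ] H)) :
    ‖NormedSpace.exp X - NormedSpace.exp Y‖ ≤ ‖X - Y‖ := by
  let _ : NormedAlgebra ℚ (H →L[ℂ] H) := .restrictScalars ℚ ℂ (H →L[ℂ] H)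
  have hs : ∀ (Z : H →L[ℂ] H), Z ∈ skewAdjoint (H →L[ℂ] H) → ∀ t : ℝ,
      NormedSpace.exp (t • Z) ∈ unitary (H →L[ℂ] H) := fun Z hZ t =>
    NormedSpace.exp_mem_unitary_of_mem_skewAdjoint (skewAdjoint.smul_mem t hZ)
  have hnY : -Y ∈ skewAdjoint (H →L[ℂ] H) := neg_mem hY
  have hd : ∀ t : ℝ, HasDerivAt
      (fun u : ℝ => NormedSpace.exp (u • X) * NormedSpace.exp (u • (-Y)))
      (NormedSpace.exp (t • X) * (X - Y) * NormedSpace.exp (t • (-Y))) t := by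
    intro t
    have h := (hasDerivAt_exp_smul_const X t).mul (hasDerivAt_exp_smul_const' (-Y) t)
    refine h.congr_deriv ?_
    noncomm_ring
  have hm := norm_image_sub_le_of_norm_deriv_le_segment_01' (C := ‖X - Y‖)
    (fun t _ => (hd t).hasDerivWithinAt) (fun t _ => by
      rw [CStarRing.norm_mul_mem_unitary _ (hs _ hnY t),
        CStarRing.norm_mem_unitary_mul _ (hs _ hX t)])
  have hY1 : NormedSpace.exp Y ∈ unitary (H →L[ℂ] H) := by simpa using hs Y hY 1
  rw [← CStarRing.norm_mul_mem_unitary _ hY1] at hm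
  have hinv : NormedSpace.exp (-Y) * NormedSpace.exp Y = 1 := by
    rw [← NormedSpace.exp_add_of_commute (Commute.refl Y).neg_left]
    simp
  simpa [sub_mul, mul_assoc, hinv] using hm

/-- The elementary primitive. -/
noncomputable def gPrim (s x : ℝ) : ℂ :=
  ∫ t in (0 : ℝ)..x, Complex.exp (-(Complex.I * (s : ℂ) * (t : ℂ)))

lemma gPrim_continuous : Continuous (fun p : ℝ × ℝ => gPrim p.1 p.2) := by
  unfold gPrim
  apply intervalIntegral.continuous_parametric_intervalIntegral_of_continuous
  · unfold Function.uncurry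
    fun_prop
  · fun_prop

lemma norm_gPrim_le (s x : ℝ) : ‖gPrim s x‖ ≤ |x| := by
  have h := intervalIntegral.norm_integral_le_of_norm_le_const (a := (0 : ℝ)) (b := x) (C := 1)
    (f := fun t : ℝ => Complex.exp (-(Complex.I * (s : ℂ) * (t : ℂ)))) (by
      intro t _
      rw [Complex.norm_exp]
      simp)
  simpa [gPrim] using h

lemma cfc_re_eq {H : Type*} [NormedAddCommGroup H] [InnerProductSpace ℂ H]
    [CompleteSpace H] (A : H →L[ℂ] H) (hA : IsSelfAdjoint A) (z : ℂ) (hz : z ∈ spectrum ℂ A) :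
    ((z.re : ℝ) : ℂ) = z := (hA.mem_spectrum_eq_re hz).symm

lemma cfc_gPrim_of_ne {H : Type*} [NormedAddCommGroup H] [InnerProductSpace ℂ H]
    [CompleteSpace H] (A : H →L[ℂ] H) (hA : IsSelfAdjoint A) (s : ℝ) (hs : s ≠ 0) :
    cfc (fun z : ℂ => gPrim s z.re) A =
      (-(Complex.I * s))⁻¹ • (NormedSpace.exp ((-(Complex.I * s)) • A) - 1) := by
  have hc : (-(Complex.I * s) : ℂ) ≠ 0 := by simp [hs]
  have hN : IsStarNormal A := hA.isStarNormal
  have h1 : cfc (fun z : ℂ => gPrim s z.re) A =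
      cfc (fun z : ℂ => (-(Complex.I * s))⁻¹ • (Complex.exp ((-(Complex.I * s)) • z) - 1)) A := by
    apply cfc_congr
    intro z hz
    have := cfc_re_eq A hA z hz
    have h2 := integral_exp_mul_complex (a := 0) (b := z.re) hc
    simp only [gPrim]
    simp only [neg_mul] at h2
    rw [h2, this]
    simp [div_eq_inv_mul]
  rw [h1, cfc_smul _ _ A (by fun_prop), cfc_sub _ _ A (by fun_prop) (by fun_prop),
    cfc_const_one ℂ A, cfc_comp_smul (-(Complex.I * s)) Complex.exp A (by fun_prop) hN]
  have hN' : IsStarNormal ((-(Complex.I * s)) • A) := by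
    infer_instance
  rw [CFC.complex_exp_eq_normedSpace_exp (ha := hN')]

lemma norm_cfc_gPrim_sub_le {H : Type*} [NormedAddCommGroup H] [InnerProductSpace ℂ H]
    [CompleteSpace H] (A B : H →L[ℂ] H) (hA : IsSelfAdjoint A) (hB : IsSelfAdjoint B) (s : ℝ) :
    ‖cfc (fun z : ℂ => gPrim s z.re) A - cfc (fun z : ℂ => gPrim s z.re) B‖ ≤ ‖A - B‖ := by
  by_cases hs : s = 0
  · have key : ∀ C : H →L[ℂ] H, IsSelfAdjoint C → cfc (fun z : ℂ => gPrim s z.re) C = C := by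
      intro C hC
      have hN : IsStarNormal C := hC.isStarNormal
      conv_rhs => rw [← cfc_id ℂ C hN]
      apply cfc_congr
      intro z hz
      simp [gPrim, hs, cfc_re_eq C hC z hz]
    rw [key A hA, key B hB]
  · rw [cfc_gPrim_of_ne A hA s hs, cfc_gPrim_of_ne B hB s hs, ← smul_sub, sub_sub_sub_cancel_right,
      norm_smul]
    have hsk : ∀ C : H →L[ℂ] H, IsSelfAdjoint C →
        (-(Complex.I * s) : ℂ) • C ∈ skewAdjoint (H →L[ℂ] H) := by
      intro C hC
      apply hC.smul_mem_skewAdjoint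
      rw [skewAdjoint.mem_iff]
      simp
    have h := norm_exp_sub_exp_le_skew _ _ (hsk A hA) (hsk B hB)
    rw [← smul_sub, norm_smul] at h
    have hp : 0 < ‖(-(Complex.I * s) : ℂ)‖ := by simp [hs]
    rw [norm_inv, inv_mul_le_iff₀ hp]
    exact h

lemma cfc_main {H : Type*} [NormedAddCommGroup H] [InnerProductSpace ℂ H] [CompleteSpace H]
    (ν : Measure ℝ) [IsFiniteMeasure ν]
    (ρ : ℝ → ℂ) (hρm : Measurable ρ) (hρ : ∀ s : ℝ, ‖ρ s‖ ≤ 1)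
    (A : H →L[ℂ] H) (hA : IsSelfAdjoint A) (c : ℂ) :
    Integrable (fun s => ρ s • cfc (fun z : ℂ => gPrim s z.re) A) ν ∧
    cfc (fun z : ℂ => c + ∫ s, ρ s • gPrim s z.re ∂ν) A =
      algebraMap ℂ (H →L[ℂ] H) c + ∫ s, ρ s • cfc (fun z : ℂ => gPrim s z.re) A ∂ν := by
  have hN : IsStarNormal A := hA.isStarNormal
  let G : ℝ → C(spectrum ℂ A, ℂ) := fun s =>
    ⟨fun z => gPrim s (z : ℂ).re, gPrim_continuous.comp (by fun_prop : Continuous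
      fun z : spectrum ℂ A => ((s, (z : ℂ).re) : ℝ × ℝ))⟩
  have hGc : Continuous G := by
    apply ContinuousMap.continuous_of_continuous_uncurry
    exact gPrim_continuous.comp (by fun_prop : Continuous
      fun p : ℝ × spectrum ℂ A => ((p.1, (p.2 : ℂ).re) : ℝ × ℝ))
  have hGb : ∀ s, ‖G s‖ ≤ ‖A‖ * ‖(1 : H →L[ℂ] H)‖ := by
    intro s
    rw [ContinuousMap.norm_le _ (by positivity)]
    intro z
    exact (norm_gPrim_le s _).trans ((Complex.abs_re_le_norm _).trans
      (spectrum.norm_le_norm_mul_of_mem z.2))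
  have hInt : Integrable (fun s => ρ s • G s) ν := by
    refine Integrable.of_bound
      (hρm.aestronglyMeasurable.smul hGc.aestronglyMeasurable) (‖A‖ * ‖(1 : H →L[ℂ] H)‖) ?_
    refine .of_forall fun s => ?_
    rw [norm_smul]
    calc _ ≤ 1 * ‖G s‖ := by gcongr; exact hρ s
      _ ≤ _ := by rw [one_mul]; exact hGb s
  have hco : ∀ s, ContinuousOn (fun z : ℂ => gPrim s z.re) (spectrum ℂ A) := fun s =>
    (gPrim_continuous.comp (by fun_prop : Continuous
      fun z : ℂ => ((s, z.re) : ℝ × ℝ))).continuousOn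
  have hcfc : ∀ s, ρ s • cfc (fun z : ℂ => gPrim s z.re) A = cfcL (a := A) hN (ρ s • G s) := by
    intro s
    rw [map_smul, cfc_apply _ A hN (hco s)]
    rfl
  have hpt : ∀ z : spectrum ℂ A, (∫ s, ρ s • G s ∂ν) z = ∫ s, ρ s • gPrim s (z : ℂ).re ∂ν := by
    intro z
    rw [ContinuousMap.integral_apply hInt]
    rfl
  have hcI : ContinuousOn (fun z : ℂ => ∫ s, ρ s • gPrim s z.re ∂ν) (spectrum ℂ A) := by
    rw [continuousOn_iff_continuous_restrict]
    exact (∫ s, ρ s • G s ∂ν).continuous.congr hpt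
  simp_rw [hcfc]
  refine ⟨cfcL_integrable A _ hInt hN, ?_⟩
  rw [cfcL_integral A _ hInt hN, cfc_const_add c _ A hcI, cfc_apply _ A hN hcI]
  congr 1
  change cfcHom hN _ = cfcHom hN _
  congr 1
  ext z
  exact (hpt z).symm

/-- A primitive of the Fourier transform of a complex measure `μ = ρ·ν` (with
`ν` a finite positive Borel measure and `|ρ| ≤ 1`) is operator Lipschitz with
constant at most the total mass `ν(ℝ)`: if
`f x = f 0 + ∫₀ˣ (∫ e^{-i s t} ρ(s) dν(s)) dt`, then for all bounded
self-adjoint operators `A`, `B`, `‖f(A) - f(B)‖ ≤ ν(ℝ) * ‖A - B‖`. -/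
theorem stmt_4 {H : Type*} [NormedAddCommGroup H] [InnerProductSpace ℂ H] [CompleteSpace H]
    (ν : Measure ℝ) [IsFiniteMeasure ν]
    (ρ : ℝ → ℂ) (hρm : Measurable ρ) (hρ : ∀ s : ℝ, ‖ρ s‖ ≤ 1)
    (f : ℝ → ℂ)
    (hf : ∀ x : ℝ, f x = f 0 +
      ∫ t in (0 : ℝ)..x, ∫ s, Complex.exp (-(Complex.I * (s : ℂ) * (t : ℂ))) * ρ s ∂ν)
    (A B : H →L[ℂ] H) (hA : IsSelfAdjoint A) (hB : IsSelfAdjoint B) :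
    ‖cfc (fun z : ℂ => f z.re) A - cfc (fun z : ℂ => f z.re) B‖ ≤
      (ν Set.univ).toReal * ‖A - B‖ := by
  have hf' : (fun z : ℂ => f z.re) = fun z : ℂ => f 0 + ∫ s, ρ s • gPrim s z.re ∂ν := by
    funext z
    rw [hf z.re, intervalIntegral_integral_swap]
    · congr 2
      funext s
      rw [intervalIntegral.integral_mul_const, smul_eq_mul, mul_comm]
      rfl
    · haveI : IsFiniteMeasure (volume.restrict (Set.uIoc 0 z.re)) := by
        constructor
        simp [Set.uIoc]
      refine Integrable.of_bound (C := 1) ?_ (.of_forall fun p => ?_)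
      · apply Measurable.aestronglyMeasurable
        unfold Function.uncurry
        fun_prop
      · simp only [Function.uncurry, norm_mul, Complex.norm_exp]
        simpa using hρ p.2
  rw [hf']
  obtain ⟨iA, eA⟩ := cfc_main ν ρ hρm hρ A hA (f 0)
  obtain ⟨iB, eB⟩ := cfc_main ν ρ hρm hρ B hB (f 0)
  rw [eA, eB, add_sub_add_left_eq_sub, ← integral_sub iA iB]
  have h := norm_integral_le_of_norm_le_const (μ := ν) (C := ‖A - B‖)
    (f := fun s => ρ s • cfc (fun z : ℂ => gPrim s z.re) A -
      ρ s • cfc (fun z : ℂ => gPrim s z.re) B) (.of_forall fun s => by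
      rw [← smul_sub, norm_smul]
      calc _ ≤ 1 * ‖A - B‖ := by
            gcongr
            · exact hρ s
            · exact norm_cfc_gPrim_sub_le A B hA hB s
        _ = _ := one_mul _)
  rw [mul_comm]
  exact h
end

section
/- Let f : ℝ → ℂ be continuous with f(0) = 0, and let M ≥ 0 be such that f is operator Lipschitz with constant M. Define g : ℝ → ℂ by g(x) = x²·f(1/x) for x ≠ 0 and g(0) = 0. Then g is operator Lipschitz with constant 3M; that is, for every complex Hilbert space H and all bounded self-adjoint operators A, B on H, ‖g(A) − g(B)‖ ≤ 3·M·‖A − B‖. -/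
/-- A function `f : ℝ → ℂ` is operator Lipschitz with constant `M` if for every
complex Hilbert space `H` and all bounded self-adjoint operators `A`, `B` on `H`,
`‖f(A) - f(B)‖ ≤ M * ‖A - B‖`, where `f(A)` is the continuous functional
calculus of `A` applied to `z ↦ f (Re z)`. -/
def OperatorLipschitzWith (M : ℝ) (f : ℝ → ℂ) : Prop :=
  ∀ (H : Type) [NormedAddCommGroup H] [InnerProductSpace ℂ H] [CompleteSpace H]
    (A B : H →L[ℂ] H), IsSelfAdjoint A → IsSelfAdjoint B →
    ‖cfc (fun z : ℂ => f z.re) A - cfc (fun z : ℂ => f z.re) B‖ ≤ M * ‖A - B‖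

namespace OLaux
open Filter Topology Polynomial

/-- Uniform polynomial approximation of the functional calculus. -/
lemma approx (h : ℝ → ℂ) (hh : Continuous h) (R δ : ℝ) (hδ : 0 < δ) :
    ∃ p : ℂ[X], ∀ (H : Type) [NormedAddCommGroup H] [InnerProductSpace ℂ H] [CompleteSpace H]
      (A : H →L[ℂ] H), IsSelfAdjoint A → ‖A‖ ≤ R →
      ‖cfc (fun z : ℂ => h z.re) A - aeval A p‖ ≤ δ := by
  obtain ⟨p, hp⟩ := exists_polynomial_near_of_continuousOn (-R) R (fun x => (h x).re)
    (by fun_prop) (δ / 2) (by positivity)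
  obtain ⟨q, hq⟩ := exists_polynomial_near_of_continuousOn (-R) R (fun x => (h x).im)
    (by fun_prop) (δ / 2) (by positivity)
  refine ⟨p.map (algebraMap ℝ ℂ) + C Complex.I * q.map (algebraMap ℝ ℂ), ?_⟩
  intro H _ _ _ A hA hAR
  have hn : IsStarNormal A := hA.isStarNormal
  rw [← cfc_polynomial _ A hn, ← cfc_sub _ _ A (by fun_prop) (by fun_prop)]
  refine norm_cfc_le hδ.le ?_
  intro z hz
  have hre := hA.mem_spectrum_eq_re hz
  have hR : |z.re| ≤ R := by
    have h1 := spectrum.subset_closedBall_norm_mul A hz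
    rw [mem_closedBall_zero_iff] at h1
    have h2 : ‖(1 : H →L[ℂ] H)‖ ≤ 1 := ContinuousLinearMap.norm_id_le
    calc |z.re| ≤ ‖z‖ := Complex.abs_re_le_norm z
      _ ≤ ‖A‖ * ‖(1 : H →L[ℂ] H)‖ := h1
      _ ≤ ‖A‖ * 1 := by gcongr
      _ ≤ R := by simpa using hAR
  have hm : z.re ∈ Set.Icc (-R) R := abs_le.mp hR
  set x := z.re
  have e : h x - eval z (p.map (algebraMap ℝ ℂ) + C Complex.I * q.map (algebraMap ℝ ℂ))
      = (((h x).re - eval x p : ℝ) : ℂ) + Complex.I * (((h x).im - eval x q : ℝ) : ℂ) := by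
    have e1 : ∀ p : ℝ[X], eval z (p.map (algebraMap ℝ ℂ)) = ((eval x p : ℝ) : ℂ) := by
      intro p
      rw [hre]
      exact eval_map_apply (f := algebraMap ℝ ℂ) (p := p) x
    rw [eval_add, eval_mul, eval_C, e1, e1]
    conv_lhs => rw [← Complex.re_add_im (h x)]
    push_cast
    ring
  rw [e]
  refine (norm_add_le _ _).trans ?_
  rw [norm_mul, Complex.norm_I, one_mul, Complex.norm_real, Complex.norm_real, Real.norm_eq_abs,
    Real.norm_eq_abs, abs_sub_comm, abs_sub_comm (h x).im]
  linarith [hp x hm, hq x hm]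

lemma aeval_intertwine {H K : Type} [NormedAddCommGroup H] [InnerProductSpace ℂ H]
    [NormedAddCommGroup K] [InnerProductSpace ℂ K]
    (S : K →L[ℂ] K) (T : H →L[ℂ] H) (V : H →L[ℂ] K) (hV : S ∘L V = V ∘L T) (p : ℂ[X]) :
    (aeval S p) ∘L V = V ∘L (aeval T p) := by
  have hpow : ∀ n : ℕ, (S ^ n) ∘L V = V ∘L (T ^ n) := by
    intro n
    induction n with
    | zero => rfl
    | succ n ih =>
      rw [pow_succ, pow_succ']
      change (S ^ n) ∘L (S ∘L V) = V ∘L (T ∘L (T ^ n))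
      rw [hV, ← ContinuousLinearMap.comp_assoc, ih, ContinuousLinearMap.comp_assoc]
      change V ∘L (T ^ n * T) = V ∘L (T * T ^ n)
      rw [← pow_succ, ← pow_succ']
  induction p using Polynomial.induction_on' with
  | add p q hp hq => simp [hp, hq]
  | monomial n a =>
    ext x
    have := congrArg (fun L => L x) (hpow n)
    simp only [ContinuousLinearMap.comp_apply] at this
    simp [aeval_monomial, Algebra.algebraMap_eq_smul_one, this]

lemma intertwine (h : ℝ → ℂ) (hh : Continuous h) {H K : Type} [NormedAddCommGroup H]
    [InnerProductSpace ℂ H] [CompleteSpace H]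
    [NormedAddCommGroup K] [InnerProductSpace ℂ K] [CompleteSpace K]
    (S : K →L[ℂ] K) (T : H →L[ℂ] H) (hS : IsSelfAdjoint S) (hT : IsSelfAdjoint T)
    (V : H →L[ℂ] K) (hV : S ∘L V = V ∘L T) :
    (cfc (fun z : ℂ => h z.re) S) ∘L V = V ∘L (cfc (fun z : ℂ => h z.re) T) := by
  rw [← sub_eq_zero, ← norm_le_zero_iff]
  refine le_of_forall_pos_le_add ?_
  intro ε hε
  set δ := ε / (2 * (‖V‖ + 1)) with hδ
  have hδ0 : 0 < δ := by positivity
  obtain ⟨p, hp⟩ := approx h hh (max ‖S‖ ‖T‖) δ hδ0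
  have h1 := hp K S hS (le_max_left _ _)
  have h2 := hp H T hT (le_max_right _ _)
  have h3 := aeval_intertwine S T V hV p
  have e : (cfc (fun z : ℂ => h z.re) S) ∘L V - V ∘L (cfc (fun z : ℂ => h z.re) T)
      = (cfc (fun z : ℂ => h z.re) S - aeval S p) ∘L V
        - V ∘L (cfc (fun z : ℂ => h z.re) T - aeval T p) := by
    rw [ContinuousLinearMap.sub_comp, ContinuousLinearMap.comp_sub, h3]
    abel
  rw [e]
  calc _ ≤ δ * ‖V‖ + ‖V‖ * δ := by
        refine (norm_sub_le _ _).trans (add_le_add ?_ ?_)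
        · exact (ContinuousLinearMap.opNorm_comp_le _ _).trans (by gcongr)
        · exact (ContinuousLinearMap.opNorm_comp_le _ _).trans (by gcongr)
    _ ≤ δ * (2 * (‖V‖ + 1)) := by nlinarith
    _ = 0 + ε := by rw [hδ]; field_simp; simp

lemma comm_unitary {f : ℝ → ℂ} (hf : Continuous f) {M : ℝ} (hlip : OperatorLipschitzWith M f)
    {H : Type} [NormedAddCommGroup H] [InnerProductSpace ℂ H] [CompleteSpace H]
    (S : H →L[ℂ] H) (hS : IsSelfAdjoint S) (U : H →L[ℂ] H) (hU : U ∈ unitary (H →L[ℂ] H)) :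
    ‖cfc (fun z : ℂ => f z.re) S * U - U * cfc (fun z : ℂ => f z.re) S‖ ≤ M * ‖S * U - U * S‖ := by
  have hsu := Unitary.star_mul_self_of_mem hU
  have hus := Unitary.mul_star_self_of_mem hU
  have hT : IsSelfAdjoint (U * S * star U) := hS.conjugate U
  have h1 := intertwine f hf (U * S * star U) S hT hS U (by
    change U * S * star U * U = U * S
    rw [mul_assoc, hsu, mul_one])
  change _ * U = U * _ at h1
  rw [← h1, ← sub_mul]
  have h2 : S * U - U * S = (S - U * S * star U) * U := by
    rw [sub_mul, mul_assoc _ (star U), hsu, mul_one]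
  rw [h2, CStarRing.norm_mul_mem_unitary _ hU, CStarRing.norm_mul_mem_unitary _ hU]
  exact hlip H _ _ hS hT

lemma comm_sa {f : ℝ → ℂ} (hf : Continuous f) {M : ℝ} (hlip : OperatorLipschitzWith M f)
    {H : Type} [NormedAddCommGroup H] [InnerProductSpace ℂ H] [CompleteSpace H]
    (S : H →L[ℂ] H) (hS : IsSelfAdjoint S) (Y : H →L[ℂ] H) (hY : IsSelfAdjoint Y) :
    ‖cfc (fun z : ℂ => f z.re) S * Y - Y * cfc (fun z : ℂ => f z.re) S‖ ≤ M * ‖S * Y - Y * S‖ := by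
  set W : ℝ → (H →L[ℂ] H) := fun t => NormedSpace.exp (t • (Complex.I • Y)) with hW
  have hd : HasDerivAt W (Complex.I • Y) 0 := by
    have := hasDerivAt_exp_smul_const (𝕂 := ℝ) (Complex.I • Y) 0
    simpa using this
  have hWu : ∀ t, W t ∈ unitary (H →L[ℂ] H) := by
    intro t
    have h1 : IsSelfAdjoint (t • Y) := IsSelfAdjoint.smul (by simp [isSelfAdjoint_iff]) hY
    have := (selfAdjoint.expUnitary ⟨t • Y, h1⟩).2
    rw [selfAdjoint.expUnitary_coe] at this
    simpa [hW, smul_comm t Complex.I Y] using this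
  have hlim : ∀ Z : H →L[ℂ] H,
      Tendsto (fun t : ℝ => ‖t⁻¹ • (Z * W t - W t * Z)‖) (𝓝[≠] 0) (𝓝 ‖Z * Y - Y * Z‖) := by
    intro Z
    have hd2 : HasDerivAt (fun t => Z * W t - W t * Z)
        (Z * (Complex.I • Y) - (Complex.I • Y) * Z) 0 := (hd.const_mul Z).sub (hd.mul_const Z)
    have h3 := hd2.tendsto_slope_zero.norm
    have h4 : ‖Z * (Complex.I • Y) - (Complex.I • Y) * Z‖ = ‖Z * Y - Y * Z‖ := by
      rw [mul_smul_comm, smul_mul_assoc, ← smul_sub, norm_smul]; simp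
    rw [h4] at h3
    simpa [hW] using h3
  refine le_of_tendsto_of_tendsto (hlim _) ((hlim S).const_mul M) (Eventually.of_forall ?_)
  intro t
  simp only [norm_smul]
  have := comm_unitary hf hlip S hS (W t) (hWu t)
  calc _ ≤ ‖t⁻¹‖ * (M * ‖S * W t - W t * S‖) := by gcongr
    _ = _ := by ring


lemma comm_general {f : ℝ → ℂ} (hf : Continuous f) {M : ℝ} (hM : 0 ≤ M)
    (hlip : OperatorLipschitzWith M f)
    {H : Type} [NormedAddCommGroup H] [InnerProductSpace ℂ H] [CompleteSpace H]
    (S T : H →L[ℂ] H) (hS : IsSelfAdjoint S) (hT : IsSelfAdjoint T) (Y : H →L[ℂ] H) :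
    ‖cfc (fun z : ℂ => f z.re) S * Y - Y * cfc (fun z : ℂ => f z.re) T‖ ≤ M * ‖S * Y - Y * T‖ := by
  let P : WithLp 2 (H × H) →L[ℂ] H := WithLp.fstL 2 ℂ H H
  let Q : WithLp 2 (H × H) →L[ℂ] H := WithLp.sndL 2 ℂ H H
  let e := (WithLp.prodContinuousLinearEquiv 2 ℂ H H).symm.toContinuousLinearMap
  let I : H →L[ℂ] WithLp 2 (H × H) := e ∘L ContinuousLinearMap.inl ℂ H H
  let J : H →L[ℂ] WithLp 2 (H × H) := e ∘L ContinuousLinearMap.inr ℂ H H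
  have hP : ∀ x, P x = x.fst := fun x => rfl
  have hQ : ∀ x, Q x = x.snd := fun x => rfl
  have hI : ∀ x, I x = WithLp.toLp 2 (x, 0) := fun x => rfl
  have hJ : ∀ x, J x = WithLp.toLp 2 (0, x) := fun x => rfl
  let S' := I ∘L S ∘L P + J ∘L T ∘L Q
  let Y' := I ∘L Y ∘L Q + J ∘L (star Y) ∘L P
  have hS'a : ∀ x, S' x = WithLp.toLp 2 (S x.fst, T x.snd) := by
    intro x; simp [S', hP, hQ, hI, hJ, ← WithLp.toLp_add]
  have hY'a : ∀ x, Y' x = WithLp.toLp 2 (Y x.snd, star Y x.fst) := by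
    intro x; simp [Y', hP, hQ, hI, hJ, ← WithLp.toLp_add]
  have hSs := ContinuousLinearMap.isSelfAdjoint_iff_isSymmetric.mp hS
  have hTs := ContinuousLinearMap.isSelfAdjoint_iff_isSymmetric.mp hT
  have hS' : IsSelfAdjoint S' := by
    rw [ContinuousLinearMap.isSelfAdjoint_iff_isSymmetric]
    intro x y
    have h1 := hSs x.fst y.fst
    have h2 := hTs x.snd y.snd
    simp only [ContinuousLinearMap.coe_coe] at h1 h2 ⊢
    rw [hS'a, hS'a]
    simp only [WithLp.prod_inner_apply]
    exact congrArg₂ (· + ·) h1 h2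
  have hY' : IsSelfAdjoint Y' := by
    rw [ContinuousLinearMap.isSelfAdjoint_iff_isSymmetric]
    intro x y
    have h1 := ContinuousLinearMap.adjoint_inner_right Y x.snd y.fst
    have h2 := ContinuousLinearMap.adjoint_inner_left Y y.snd x.fst
    simp only [ContinuousLinearMap.coe_coe] at h1 h2 ⊢
    rw [hY'a, hY'a]
    simp only [WithLp.prod_inner_apply, ContinuousLinearMap.star_eq_adjoint]
    rw [add_comm]
    exact congrArg₂ (· + ·) h2 h1.symm
  have key := comm_sa hf hlip S' hS' Y' hY'
  set C := S * Y - Y * T with hC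
  have hCs : star C = Y.adjoint * S - T * Y.adjoint := by
    rw [hC, star_sub, star_mul, star_mul, hS.star_eq, hT.star_eq, ContinuousLinearMap.star_eq_adjoint]
  have hbound : ‖S' * Y' - Y' * S'‖ ≤ ‖C‖ := by
    refine ContinuousLinearMap.opNorm_le_bound _ (norm_nonneg _) ?_
    intro x
    have h1 : (S' * Y' - Y' * S') x = WithLp.toLp 2 (C x.snd, -(star C x.fst)) := by
      rw [hCs, hC]
      simp [hS'a, hY'a, ContinuousLinearMap.star_eq_adjoint, ← WithLp.toLp_sub]
    rw [h1]
    refine abs_le_of_sq_le_sq' ?_ (by positivity) |>.2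
    rw [mul_pow, WithLp.prod_norm_sq_eq_of_L2, WithLp.prod_norm_sq_eq_of_L2]
    have h2 := C.le_opNorm x.snd
    have h3 := (star C).le_opNorm x.fst
    rw [norm_star] at h3
    simp only [WithLp.toLp_fst, WithLp.toLp_snd, norm_neg]
    have h4 := pow_le_pow_left₀ (norm_nonneg _) h2 2
    have h5 := pow_le_pow_left₀ (norm_nonneg _) h3 2
    rw [mul_pow] at h4 h5
    linarith
  have i1 := intertwine f hf S S' hS hS' P (by ext x; simp [hP, hS'a])
  have i2 := intertwine f hf S' T hS' hT J (by ext x; simp [hJ, hS'a])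
  set F := cfc (fun z : ℂ => f z.re) S'
  have hcorner : cfc (fun z : ℂ => f z.re) S * Y - Y * cfc (fun z : ℂ => f z.re) T
      = P ∘L (F * Y' - Y' * F) ∘L J := by
    ext x
    have a1 := congrArg (fun L => L (Y' (J x))) i1
    have a2 := congrArg (fun L => L x) i2
    simp only [ContinuousLinearMap.comp_apply] at a1 a2
    simp only [ContinuousLinearMap.comp_apply, sub_apply,
      mul_apply_eq_comp, map_sub]
    rw [← a1, a2]
    simp [hY'a, hJ, hP]
  rw [hcorner]
  have nP : ‖P‖ ≤ 1 := ContinuousLinearMap.opNorm_le_bound _ zero_le_one fun x => by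
    rw [one_mul]
    refine abs_le_of_sq_le_sq' ?_ (by positivity) |>.2
    rw [WithLp.prod_norm_sq_eq_of_L2, hP]; nlinarith [sq_nonneg ‖x.snd‖]
  have nJ : ‖J‖ ≤ 1 := ContinuousLinearMap.opNorm_le_bound _ zero_le_one fun x => by
    rw [one_mul]
    refine abs_le_of_sq_le_sq' ?_ (by positivity) |>.2
    rw [WithLp.prod_norm_sq_eq_of_L2, hJ]; simp
  calc _ ≤ ‖P‖ * (‖F * Y' - Y' * F‖ * ‖J‖) :=
        (ContinuousLinearMap.opNorm_comp_le _ _).trans (by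
          gcongr; exact ContinuousLinearMap.opNorm_comp_le _ _)
    _ ≤ 1 * (‖F * Y' - Y' * F‖ * 1) := by gcongr
    _ = ‖F * Y' - Y' * F‖ := by ring
    _ ≤ M * ‖S' * Y' - Y' * S'‖ := key
    _ ≤ M * ‖C‖ := by gcongr

lemma scalar_lip {f : ℝ → ℂ} {M : ℝ} (hlip : OperatorLipschitzWith M f) (hf0 : f 0 = 0) (x : ℝ) :
    ‖f x‖ ≤ M * |x| := by
  have h := hlip ℂ (algebraMap ℂ (ℂ →L[ℂ] ℂ) (x : ℂ)) (algebraMap ℂ (ℂ →L[ℂ] ℂ) 0)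
    (by rw [isSelfAdjoint_iff, ← algebraMap_star_comm]; simp)
    (by rw [isSelfAdjoint_iff, ← algebraMap_star_comm]; simp)
  rw [cfc_algebraMap, cfc_algebraMap] at h
  rw [← map_sub, ← map_sub, norm_algebraMap', norm_algebraMap'] at h
  simpa [hf0] using h

lemma unit_case {f : ℝ → ℂ} (hf : Continuous f) (hf0 : f 0 = 0) {M : ℝ} (hM : 0 ≤ M)
    (hlip : OperatorLipschitzWith M f)
    {g : ℝ → ℂ} (hg : ∀ x : ℝ, x ≠ 0 → g x = (x : ℂ) ^ 2 * f x⁻¹)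
    {H : Type} [NormedAddCommGroup H] [InnerProductSpace ℂ H] [CompleteSpace H]
    (A B : (H →L[ℂ] H)ˣ) (hA : IsSelfAdjoint (A : H →L[ℂ] H))
    (hB : IsSelfAdjoint (B : H →L[ℂ] H)) :
    ‖cfc (fun z : ℂ => g z.re) (A : H →L[ℂ] H) - cfc (fun z : ℂ => g z.re) (B : H →L[ℂ] H)‖
      ≤ 3 * M * ‖(A : H →L[ℂ] H) - B‖ := by
  have main : ∀ A : (H →L[ℂ] H)ˣ, IsSelfAdjoint (A : H →L[ℂ] H) →
      ∃ S F : H →L[ℂ] H, IsSelfAdjoint S ∧ S * A = 1 ∧ (A : H →L[ℂ] H) * S = 1 ∧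
        F = cfc (fun z : ℂ => f z.re) S ∧ F * A = A * F ∧ ‖F * A‖ ≤ M ∧
        cfc (fun z : ℂ => g z.re) (A : H →L[ℂ] H) = F * A * A := by
    intro A hA
    have hn : IsStarNormal (A : H →L[ℂ] H) := hA.isStarNormal
    have h0 : ∀ z ∈ spectrum ℂ (A : H →L[ℂ] H), z ≠ 0 := fun z hz => 
      spectrum.ne_zero_of_mem_of_unit hz
    have hc1 : ContinuousOn (fun z : ℂ => z⁻¹) (spectrum ℂ (A : H →L[ℂ] H)) :=
      continuousOn_inv₀.mono fun z hz => h0 z hz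
    have hc2 : ContinuousOn (fun z : ℂ => f (z⁻¹).re) (spectrum ℂ (A : H →L[ℂ] H)) :=
      (hf.comp Complex.continuous_re).comp_continuousOn hc1
    have hF : cfc (fun z : ℂ => f z.re) ((A⁻¹ : (H →L[ℂ] H)ˣ) : H →L[ℂ] H)
        = cfc (fun z : ℂ => f (z⁻¹).re) (A : H →L[ℂ] H) :=
      (cfc_comp_inv (fun z : ℂ => f z.re) A (by fun_prop) hn).symm
    have hFA : cfc (fun z : ℂ => f (z⁻¹).re) (A : H →L[ℂ] H) * A
        = cfc (fun z : ℂ => f (z⁻¹).re * z) (A : H →L[ℂ] H) := by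
      rw [cfc_mul _ _ _ hc2 (by fun_prop), cfc_id' ℂ (A : H →L[ℂ] H)]
    refine ⟨(A⁻¹ : (H →L[ℂ] H)ˣ), cfc (fun z : ℂ => f (z⁻¹).re) (A : H →L[ℂ] H), ?_, by simp,
      by simp, hF.symm, ?_, ?_, ?_⟩
    · rw [isSelfAdjoint_iff, ← Units.coe_star_inv]
      congr 1
      rw [inv_inj]
      ext1
      simpa using hA.star_eq
    · have := cfc_commute_cfc (fun z : ℂ => f (z⁻¹).re) (fun z : ℂ => z) (A : H →L[ℂ] H)
      rw [cfc_id' ℂ (A : H →L[ℂ] H)] at this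
      exact this.eq
    · rw [hFA]
      refine norm_cfc_le hM ?_
      intro z hz
      have := scalar_lip hlip hf0 (z⁻¹).re
      have hz0 := h0 z hz
      rw [norm_mul]
      calc _ ≤ M * ‖z⁻¹‖ * ‖z‖ := by
            gcongr; exact this.trans (by gcongr; exact Complex.abs_re_le_norm _)
        _ = M := by rw [norm_inv]; field_simp [norm_ne_zero_iff.mpr hz0]
    · rw [hFA]
      have : cfc (fun z : ℂ => f (z⁻¹).re * z) (A : H →L[ℂ] H) * A
        = cfc (fun z : ℂ => f (z⁻¹).re * z * z) (A : H →L[ℂ] H) := by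
        rw [cfc_mul (fun z : ℂ => f (z⁻¹).re * z) (fun z => z) _ (hc2.mul continuousOn_id)
          (by fun_prop), cfc_id' ℂ (A : H →L[ℂ] H)]
      rw [this]
      refine cfc_congr ?_
      intro z hz
      have hre := hA.mem_spectrum_eq_re hz
      have hz0 := h0 z hz
      have hx0 : z.re ≠ 0 := by
        intro h; rw [h] at hre; simp [hre] at hz0
      have : (z⁻¹).re = z.re⁻¹ := by
        conv_lhs => rw [hre, ← Complex.ofReal_inv, Complex.ofReal_re]
      simp only [this, hg _ hx0]
      conv_rhs => rw [hre]
      simp only [Complex.ofReal_re]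
      ring
  obtain ⟨S, F, hS, hSA, hAS, hF, hFA, hFn, hgA⟩ := main A hA
  obtain ⟨T, G, hT, hTB, hBT, hG, hGB, hGn, hgB⟩ := main B hB
  have hc := comm_general hf hM hlip S T hS hT ((A : H →L[ℂ] H) * B)
  rw [← hF, ← hG] at hc
  set a := (A : H →L[ℂ] H)
  set b := (B : H →L[ℂ] H)
  rw [← mul_assoc S, hSA, one_mul, mul_assoc a b T, hBT, mul_one, norm_sub_rev] at hc
  have e : F * a * a - G * b * b = (F * (a * b) - a * b * G) + (F * a) * (a - b)
      + (a - b) * (G * b) := by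
    have : a * (b * G) = a * (G * b) := by rw [hGB]
    have h2 : G * b * b = b * (G * b) := by rw [hGB, mul_assoc, hGB]
    rw [h2]
    simp only [mul_sub, sub_mul, mul_assoc] at *
    rw [this]
    abel
  rw [hgA, hgB, e]
  calc _ ≤ M * ‖a - b‖ + M * ‖a - b‖ + ‖a - b‖ * M := by
        refine (norm_add₃_le ..).trans ?_
        gcongr
        · rw [norm_sub_rev, norm_sub_rev a b]
          exact hc
        · exact (norm_mul_le _ _).trans (by gcongr)
        · exact (norm_mul_le _ _).trans (by gcongr)
    _ = _ := by ring


lemma exists_shift {H : Type} [NormedAddCommGroup H] [InnerProductSpace ℂ H]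
    [FiniteDimensional ℂ H] (A : H →L[ℂ] H) :
    ∀ᶠ ε : ℝ in 𝓝[>] 0, IsUnit (A + (ε : ℂ) • (1 : H →L[ℂ] H)) := by
  have hfin : (spectrum ℂ A).Finite := by
    have h := Module.End.finite_spectrum (K := ℂ) (A : Module.End ℂ H)
    have h2 := AlgEquiv.spectrum_eq (Module.End.toContinuousLinearMap (𝕜 := ℂ) H)
      (A : Module.End ℂ H)
    have h3 : (Module.End.toContinuousLinearMap (𝕜 := ℂ) H) (A : Module.End ℂ H) = A := by
      ext x; rfl
    rw [h3] at h2
    rwa [h2]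
  have hfin2 : ((fun ε : ℝ => -(ε : ℂ)) ⁻¹' (spectrum ℂ A)).Finite :=
    hfin.preimage (fun x _ y _ h => by simpa using h)
  have h1 : ∀ᶠ ε : ℝ in 𝓝[≠] 0, ε ∉ ((fun ε : ℝ => -(ε : ℂ)) ⁻¹' (spectrum ℂ A)) := by
    have h2 : IsClosed (((fun ε : ℝ => -(ε : ℂ)) ⁻¹' (spectrum ℂ A)) \ {0}) :=
      (hfin2.subset Set.sdiff_subset).isClosed
    have h3 := h2.isOpen_compl.mem_nhds (x := (0 : ℝ)) (by simp)
    filter_upwards [nhdsWithin_le_nhds h3, self_mem_nhdsWithin] with ε h4 h5 h6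
    exact h4 ⟨h6, h5⟩
  have h2 : 𝓝[>] (0 : ℝ) ≤ 𝓝[≠] 0 := nhdsWithin_mono _ fun x hx => ne_of_gt hx
  filter_upwards [h2 h1] with ε hε
  have h3 : IsUnit (algebraMap ℂ (H →L[ℂ] H) (-(ε : ℂ)) - A) := spectrum.notMem_iff.mp hε
  have h4 : A + (ε : ℂ) • (1 : H →L[ℂ] H) = -(algebraMap ℂ (H →L[ℂ] H) (-(ε : ℂ)) - A) := by
    rw [Algebra.algebraMap_eq_smul_one, neg_smul]; abel
  rw [h4]
  exact h3.neg

lemma fd_case {g : ℝ → ℂ} (hgc : Continuous g) {K : ℝ}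
    (hunit : ∀ (H : Type) [NormedAddCommGroup H] [InnerProductSpace ℂ H] [CompleteSpace H]
      (A B : (H →L[ℂ] H)ˣ), IsSelfAdjoint (A : H →L[ℂ] H) → IsSelfAdjoint (B : H →L[ℂ] H) →
      ‖cfc (fun z : ℂ => g z.re) (A : H →L[ℂ] H) - cfc (fun z : ℂ => g z.re) (B : H →L[ℂ] H)‖
      ≤ K * ‖(A : H →L[ℂ] H) - B‖)
    (H : Type) [NormedAddCommGroup H] [InnerProductSpace ℂ H] [CompleteSpace H]
    [FiniteDimensional ℂ H] (A B : H →L[ℂ] H) (hA : IsSelfAdjoint A) (hB : IsSelfAdjoint B) :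
    ‖cfc (fun z : ℂ => g z.re) A - cfc (fun z : ℂ => g z.re) B‖ ≤ K * ‖A - B‖ := by
  refine le_of_forall_pos_le_add ?_
  intro η hη
  obtain ⟨p, hp⟩ := approx g hgc (max ‖A‖ ‖B‖ + 1) (η / 6) (by positivity)
  have hsh : ∀ A : H →L[ℂ] H, Tendsto (fun ε : ℝ => A + (ε : ℂ) • (1 : H →L[ℂ] H)) (𝓝[>] 0) (𝓝 A) := by
    intro A
    have : Continuous (fun ε : ℝ => A + (ε : ℂ) • (1 : H →L[ℂ] H)) := by fun_prop
    have := this.tendsto 0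
    simp only [Complex.ofReal_zero, zero_smul, add_zero] at this
    exact this.mono_left nhdsWithin_le_nhds
  have hpe : ∀ A : H →L[ℂ] H, ∀ᶠ ε : ℝ in 𝓝[>] 0,
      ‖aeval (A + (ε : ℂ) • (1 : H →L[ℂ] H)) p - aeval A p‖ < η / 6 := by
    intro A
    have h1 := ((p.continuous_aeval (A := H →L[ℂ] H)).tendsto A).comp (hsh A)
    have h2 := (tendsto_iff_norm_sub_tendsto_zero.mp h1)
    exact h2.eventually (gt_mem_nhds (by positivity))
  have hne : ∀ A : H →L[ℂ] H, ∀ᶠ ε : ℝ in 𝓝[>] 0,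
      ‖A + (ε : ℂ) • (1 : H →L[ℂ] H)‖ < ‖A‖ + 1 := by
    intro A
    exact (hsh A).norm.eventually (gt_mem_nhds (by linarith))
  obtain ⟨ε, uA, uB, pA, pB, nA, nB⟩ := ((exists_shift A).and ((exists_shift B).and
    ((hpe A).and ((hpe B).and ((hne A).and (hne B)))))).exists
  have hsa : IsSelfAdjoint ((ε : ℂ) • (1 : H →L[ℂ] H)) :=
    IsSelfAdjoint.smul (by simp [isSelfAdjoint_iff]) (IsSelfAdjoint.one _)
  have h0 := hunit H uA.unit uB.unit (hA.add hsa) (hB.add hsa)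
  simp only [IsUnit.unit_spec, add_sub_add_right_eq_sub] at h0
  have h1 := hp H A hA (by linarith [le_max_left ‖A‖ ‖B‖])
  have h2 := hp H B hB (by linarith [le_max_right ‖A‖ ‖B‖])
  have h3 := hp H _ (hA.add hsa) (by linarith [le_max_left ‖A‖ ‖B‖])
  have h4 := hp H _ (hB.add hsa) (by linarith [le_max_right ‖A‖ ‖B‖])
  set gA := cfc (fun z : ℂ => g z.re) A
  set gB := cfc (fun z : ℂ => g z.re) B
  set gA' := cfc (fun z : ℂ => g z.re) (A + (ε : ℂ) • (1 : H →L[ℂ] H))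
  set gB' := cfc (fun z : ℂ => g z.re) (B + (ε : ℂ) • (1 : H →L[ℂ] H))
  have cA : ‖gA - gA'‖ ≤ η / 2 := by
    have e : gA - gA' = (gA - aeval A p) - (aeval (A + (ε : ℂ) • (1 : H →L[ℂ] H)) p - aeval A p)
      - (gA' - aeval (A + (ε : ℂ) • (1 : H →L[ℂ] H)) p) := by abel
    rw [e]
    refine (norm_sub_le _ _).trans ((add_le_add_left (norm_sub_le _ _) _).trans ?_)
    linarith
  have cB : ‖gB' - gB‖ ≤ η / 2 := by
    have e : gB' - gB = (gB' - aeval (B + (ε : ℂ) • (1 : H →L[ℂ] H)) p)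
      + (aeval (B + (ε : ℂ) • (1 : H →L[ℂ] H)) p - aeval B p) - (gB - aeval B p) := by abel
    rw [e]
    refine (norm_sub_le _ _).trans ((add_le_add_left (norm_add_le _ _) _).trans ?_)
    linarith
  have e : gA - gB = (gA - gA') + (gA' - gB') + (gB' - gB) := by abel
  rw [e]
  refine (norm_add₃_le ..).trans ?_
  linarith

lemma compress_aeval {H : Type} [NormedAddCommGroup H] [InnerProductSpace ℂ H]
    (V : Submodule ℂ H) [V.HasOrthogonalProjection]
    (A : H →L[ℂ] H) (p : ℂ[X]) (x : V) (hx : ∀ i ≤ p.natDegree, (A ^ i) (x : H) ∈ V) :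
    ((aeval (V.orthogonalProjectionOnto ∘L A ∘L V.subtypeL) p x : V) : H) = aeval A p (x : H) := by
  set D := V.orthogonalProjectionOnto ∘L A ∘L V.subtypeL
  have hpow : ∀ i ≤ p.natDegree, (((D ^ i) x : V) : H) = (A ^ i) (x : H) := by
    intro i
    induction i with
    | zero => intro _; simp
    | succ i ih =>
      intro hi
      have h1 := ih (by omega)
      rw [pow_succ', pow_succ']
      change ((V.orthogonalProjectionOnto (A ((D ^ i) x : V)) : V) : H) = A ((A ^ i) x)
      rw [h1]
      have h2 := hx (i + 1) hi
      rw [pow_succ'] at h2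
      exact congrArg Subtype.val
        (Submodule.orthogonalProjectionOnto_mem_subspace_eq_self (⟨_, h2⟩ : V))
  rw [aeval_eq_sum_range, aeval_eq_sum_range]
  simp only [sum_apply, smul_apply,
    AddSubmonoidClass.coe_finsetSum, Submodule.coe_smul]
  refine Finset.sum_congr rfl fun i hi => ?_
  rw [hpow i (by simpa [Nat.lt_succ_iff] using hi)]

lemma poly_diff {H : Type} [NormedAddCommGroup H] [InnerProductSpace ℂ H] [CompleteSpace H]
    (g : ℝ → ℂ) (A B : H →L[ℂ] H) (p : ℂ[X]) (r s t : ℝ)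
    (hA : ‖cfc (fun z : ℂ => g z.re) A - aeval A p‖ ≤ r)
    (hB : ‖cfc (fun z : ℂ => g z.re) B - aeval B p‖ ≤ s)
    (hAB : ‖cfc (fun z : ℂ => g z.re) A - cfc (fun z : ℂ => g z.re) B‖ ≤ t) :
    ‖aeval A p - aeval B p‖ ≤ t + r + s := by
  set a := cfc (fun z : ℂ => g z.re) A
  set b := cfc (fun z : ℂ => g z.re) B
  have e : aeval A p - aeval B p = (a - b) - (a - aeval A p) + (b - aeval B p) := by abel
  rw [e]
  refine (norm_add_le _ _).trans ((add_le_add_left (norm_sub_le _ _) _).trans ?_)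
  linarith

lemma general_case {g : ℝ → ℂ} (hgc : Continuous g) {K : ℝ} (hK : 0 ≤ K)
    (hfd : ∀ (H : Type) [NormedAddCommGroup H] [InnerProductSpace ℂ H] [CompleteSpace H]
      [FiniteDimensional ℂ H] (A B : H →L[ℂ] H), IsSelfAdjoint A → IsSelfAdjoint B →
      ‖cfc (fun z : ℂ => g z.re) A - cfc (fun z : ℂ => g z.re) B‖ ≤ K * ‖A - B‖) :
    OperatorLipschitzWith K g := by
  intro H _ _ _ A B hA hB
  refine le_of_forall_pos_le_add ?_
  intro η hη
  obtain ⟨p, hp⟩ := approx g hgc (max ‖A‖ ‖B‖) (η / 4) (by positivity)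
  have hA1 := hp H A hA (le_max_left _ _)
  have hB1 := hp H B hB (le_max_right _ _)
  refine ContinuousLinearMap.opNorm_le_bound _ (by positivity) ?_
  intro x
  let s : Set H := (fun i => (A ^ i) x) '' (Set.Iic p.natDegree) ∪
    (fun i => (B ^ i) x) '' (Set.Iic p.natDegree)
  have hs : s.Finite := ((Set.finite_Iic _).image _).union ((Set.finite_Iic _).image _)
  let V : Submodule ℂ H := Submodule.span ℂ s
  have : FiniteDimensional ℂ V := FiniteDimensional.span_of_finite ℂ hs
  have : CompleteSpace V := FiniteDimensional.complete ℂ V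
  have hAV : ∀ i ≤ p.natDegree, (A ^ i) x ∈ V := fun i hi =>
    Submodule.subset_span (Or.inl ⟨i, hi, rfl⟩)
  have hBV : ∀ i ≤ p.natDegree, (B ^ i) x ∈ V := fun i hi =>
    Submodule.subset_span (Or.inr ⟨i, hi, rfl⟩)
  have hxV : x ∈ V := by simpa using hAV 0 (Nat.zero_le _)
  let c : (H →L[ℂ] H) → (V →L[ℂ] V) := fun A => V.orthogonalProjectionOnto ∘L A ∘L V.subtypeL
  have hcn : ∀ A, ‖c A‖ ≤ ‖A‖ := by
    intro A
    refine ContinuousLinearMap.opNorm_le_bound _ (norm_nonneg _) fun v => ?_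
    exact (V.norm_orthogonalProjectionOnto_apply_le _).trans (A.le_opNorm _)
  have hcs : ∀ A, IsSelfAdjoint A → IsSelfAdjoint (c A) := by
    intro A hA
    rw [ContinuousLinearMap.isSelfAdjoint_iff_isSymmetric] at hA ⊢
    intro v w
    have := hA v w
    simp only [ContinuousLinearMap.coe_coe, c, ContinuousLinearMap.comp_apply] at this ⊢
    rw [Submodule.inner_orthogonalProjectionOnto_eq_of_mem_right,
      Submodule.inner_orthogonalProjectionOnto_eq_of_mem_left]
    exact this
  have hcd : c A - c B = c (A - B) := by
    ext v; simp [c]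
  have h0 := hfd V (c A) (c B) (hcs A hA) (hcs B hB)
  rw [hcd] at h0
  have hA2 := hp V (c A) (hcs A hA) ((hcn A).trans (le_max_left _ _))
  have hB2 := hp V (c B) (hcs B hB) ((hcn B).trans (le_max_right _ _))
  have eA := compress_aeval V A p ⟨x, hxV⟩ hAV
  have eB := compress_aeval V B p ⟨x, hxV⟩ hBV
  have e1 : ‖aeval A p x - aeval B p x‖ ≤ ‖aeval (c A) p - aeval (c B) p‖ * ‖x‖ := by
    have h := (aeval (c A) p - aeval (c B) p).le_opNorm ⟨x, hxV⟩
    refine le_trans (le_of_eq ?_) h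
    have e : aeval A p x - aeval B p x
      = (((aeval (c A) p - aeval (c B) p) ⟨x, hxV⟩ : V) : H) := by
      rw [sub_apply, Submodule.coe_sub]
      exact congrArg₂ (· - ·) eA.symm eB.symm
    rw [e]; rfl
  have e2 : ‖aeval (c A) p - aeval (c B) p‖ ≤ K * ‖A - B‖ + η / 2 := by
    have h5 := poly_diff _ _ _ p _ _ _ hA2 hB2 h0
    have : K * ‖c (A - B)‖ ≤ K * ‖A - B‖ := mul_le_mul_of_nonneg_left (hcn _) hK
    linarith
  set a := cfc (fun z : ℂ => g z.re) A
  set b := cfc (fun z : ℂ => g z.re) B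
  have e : (a - b) x = (a - aeval A p) x + (aeval A p x - aeval B p x) - (b - aeval B p) x := by
    simp only [sub_apply]; abel
  rw [e]
  refine (norm_sub_le _ _).trans ((add_le_add_left (norm_add_le _ _) _).trans ?_)
  have f1 := (a - aeval A p).le_of_opNorm_le hA1 x
  have f2 := (b - aeval B p).le_of_opNorm_le hB1 x
  have f3 : ‖aeval (c A) p - aeval (c B) p‖ * ‖x‖ ≤ (K * ‖A - B‖ + η / 2) * ‖x‖ := by gcongr
  linarith

lemma g_cont {f : ℝ → ℂ} (hf : Continuous f) (hf0 : f 0 = 0) {M : ℝ}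
    (hlip : OperatorLipschitzWith M f)
    {g : ℝ → ℂ} (hg : ∀ x : ℝ, x ≠ 0 → g x = (x : ℂ) ^ 2 * f x⁻¹) (hg0 : g 0 = 0) :
    Continuous g := by
  rw [continuous_iff_continuousAt]
  intro x
  by_cases hx : x = 0
  · subst hx
    rw [ContinuousAt, hg0]
    refine squeeze_zero_norm (a := fun x => M * |x|) ?_ ?_
    · intro x
      by_cases hx : x = 0
      · simp [hx, hg0]
      · rw [hg x hx, norm_mul, norm_pow, Complex.norm_real, Real.norm_eq_abs]
        have := scalar_lip hlip hf0 x⁻¹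
        have hx' : |x| ≠ 0 := abs_ne_zero.mpr hx
        calc _ ≤ |x| ^ 2 * (M * |x⁻¹|) := by gcongr
          _ = M * |x| := by rw [abs_inv]; field_simp
    · have : Continuous fun x : ℝ => M * |x| := by fun_prop
      simpa using this.tendsto 0
  · have h1 : ContinuousAt (fun x : ℝ => (x : ℂ) ^ 2 * f x⁻¹) x := by
      have h2 : ContinuousAt (fun x : ℝ => f x⁻¹) x :=
        hf.continuousAt.comp (continuousAt_inv₀ hx)
      exact (by fun_prop : ContinuousAt (fun x : ℝ => (x : ℂ) ^ 2) x).mul h2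
    refine h1.congr ?_
    filter_upwards [isOpen_ne.mem_nhds hx] with y hy
    exact (hg y hy).symm

end OLaux

/-- If `f : ℝ → ℂ` is continuous with `f 0 = 0` and operator Lipschitz with
constant `M`, then `g(x) = x² f(1/x)` (with `g 0 = 0`) is operator Lipschitz
with constant `3M`. -/
theorem stmt_5 (f : ℝ → ℂ) (hf : Continuous f) (hf0 : f 0 = 0)
    (M : ℝ) (hM : 0 ≤ M) (hlip : OperatorLipschitzWith M f)
    (g : ℝ → ℂ) (hg : ∀ x : ℝ, x ≠ 0 → g x = (x : ℂ) ^ 2 * f x⁻¹) (hg0 : g 0 = 0) :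
    OperatorLipschitzWith (3 * M) g := by
  have hgc := OLaux.g_cont hf hf0 hlip hg hg0
  refine OLaux.general_case hgc (by positivity) ?_
  refine OLaux.fd_case hgc ?_
  intro H _ _ _ A B hA hB
  exact OLaux.unit_case hf hf0 hM hlip hg A B hA hB
end

section
/- Hölder functions are operator Hölder: There exists a constant c > 0 such that for every α ∈ (0,1), every L ≥ 0, every function f : ℝ → ℝ satisfying |f(x) − f(y)| ≤ L·|x − y|^α for all x, y ∈ ℝ, and all bounded self-adjoint operators A and B on a complex Hilbert space, ‖f(A) − f(B)‖ ≤ c·(1 − α)^{−1}·L·‖A − B‖^α. -/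
open MeasureTheory

section
variable {H : Type} [NormedAddCommGroup H] [InnerProductSpace ℂ H] [CompleteSpace H]

noncomputable def hoQ (τ s : ℝ) (A : H →L[ℂ] H) : H →L[ℂ] H :=
  cfc (fun l : ℝ => (τ ^ 2 + (s - l) ^ 2)⁻¹) A

noncomputable def hoW (τ s : ℝ) (A : H →L[ℂ] H) : H →L[ℂ] H :=
  cfc (fun l : ℝ => (s - l) * (τ ^ 2 + (s - l) ^ 2)⁻¹) A

lemma ho_pos {τ : ℝ} (hτ : 0 < τ) (s l : ℝ) : 0 < τ ^ 2 + (s - l) ^ 2 := by positivity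

lemma ho_cont {τ : ℝ} (hτ : 0 < τ) (s : ℝ) :
    Continuous (fun l : ℝ => (τ ^ 2 + (s - l) ^ 2)⁻¹) :=
  Continuous.inv₀ (by fun_prop) (fun l => (ho_pos hτ s l).ne')

lemma ho_cont' {τ : ℝ} (hτ : 0 < τ) (s : ℝ) :
    Continuous (fun l : ℝ => (s - l) * (τ ^ 2 + (s - l) ^ 2)⁻¹) :=
  Continuous.mul (by fun_prop) (ho_cont hτ s)

lemma ho_a (s : ℝ) (A : H →L[ℂ] H) (hA : IsSelfAdjoint A) :
    cfc (fun l : ℝ => s - l) A = algebraMap ℝ (H →L[ℂ] H) s - A := by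
  rw [cfc_sub (fun _ => s) (fun l => l) A, cfc_const s A, cfc_id' ℝ A]

lemma ho_facts {τ : ℝ} (hτ : 0 < τ) (s : ℝ) (A : H →L[ℂ] H) (hA : IsSelfAdjoint A) :
    hoQ τ s A * (algebraMap ℝ (H →L[ℂ] H) s - A) = hoW τ s A ∧
    (algebraMap ℝ (H →L[ℂ] H) s - A) * hoQ τ s A = hoW τ s A ∧
    τ ^ 2 • hoQ τ s A + hoW τ s A * (algebraMap ℝ (H →L[ℂ] H) s - A) = 1 ∧
    τ ^ 2 • hoQ τ s A + (algebraMap ℝ (H →L[ℂ] H) s - A) * hoW τ s A = 1 ∧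
    τ ^ 2 • (hoQ τ s A * hoQ τ s A) + hoW τ s A * hoW τ s A = hoQ τ s A := by
  rw [← ho_a s A hA]
  unfold hoQ hoW
  have h1 := (ho_cont hτ s).continuousOn (s := spectrum ℝ A)
  have h2 := (ho_cont' hτ s).continuousOn (s := spectrum ℝ A)
  have h3 : ContinuousOn (fun l : ℝ => s - l) (spectrum ℝ A) := by fun_prop
  have c1 : ContinuousOn (fun l : ℝ => τ ^ 2 • (τ ^ 2 + (s - l) ^ 2)⁻¹) (spectrum ℝ A) :=
    continuousOn_const.mul h1
  have c2 : ContinuousOn (fun l : ℝ => (s - l) * (τ ^ 2 + (s - l) ^ 2)⁻¹ * (s - l))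
    (spectrum ℝ A) := h2.mul h3
  have c3 : ContinuousOn (fun l : ℝ => (s - l) * ((s - l) * (τ ^ 2 + (s - l) ^ 2)⁻¹))
    (spectrum ℝ A) := h3.mul h2
  have c4 : ContinuousOn (fun l : ℝ => (τ ^ 2 + (s - l) ^ 2)⁻¹ * (τ ^ 2 + (s - l) ^ 2)⁻¹)
    (spectrum ℝ A) := h1.mul h1
  have c5 : ContinuousOn (fun l : ℝ => (s - l) * (τ ^ 2 + (s - l) ^ 2)⁻¹ *
    ((s - l) * (τ ^ 2 + (s - l) ^ 2)⁻¹)) (spectrum ℝ A) := h2.mul h2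
  have c6 : ContinuousOn (fun l : ℝ => τ ^ 2 • ((τ ^ 2 + (s - l) ^ 2)⁻¹ *
    (τ ^ 2 + (s - l) ^ 2)⁻¹)) (spectrum ℝ A) := continuousOn_const.mul c4
  refine ⟨?_, ?_, ?_, ?_, ?_⟩
  · rw [← cfc_mul _ _ A h1 h3]
    exact cfc_congr fun l _ => by ring
  · rw [← cfc_mul _ _ A h3 h1]
  · rw [← cfc_mul _ _ A h2 h3, ← cfc_smul _ _ A h1, ← cfc_add A _ _ c1 c2, ← cfc_one ℝ A]
    refine cfc_congr fun l _ => ?_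
    have := (ho_pos hτ s l).ne'
    simp only [smul_eq_mul, Pi.one_apply]
    field_simp
  · rw [← cfc_mul _ _ A h3 h2, ← cfc_smul _ _ A h1, ← cfc_add A _ _ c1 c3, ← cfc_one ℝ A]
    refine cfc_congr fun l _ => ?_
    have := (ho_pos hτ s l).ne'
    simp only [smul_eq_mul, Pi.one_apply]
    field_simp
  · rw [← cfc_mul _ _ A h1 h1, ← cfc_mul _ _ A h2 h2, ← cfc_smul _ _ A c4, ← cfc_add A _ _ c6 c5]
    refine cfc_congr fun l _ => ?_
    have := (ho_pos hτ s l).ne'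
    simp only [smul_eq_mul]
    field_simp

lemma ho_diff {τ : ℝ} (hτ : 0 < τ) (s : ℝ) (A B : H →L[ℂ] H) (hA : IsSelfAdjoint A)
    (hB : IsSelfAdjoint B) :
    hoQ τ s A - hoQ τ s B = hoW τ s A * (A - B) * hoQ τ s B + hoQ τ s A * (A - B) * hoW τ s B := by
  obtain ⟨a1, a2, a3, a4, a5⟩ := ho_facts hτ s A hA
  obtain ⟨b1, b2, b3, b4, b5⟩ := ho_facts hτ s B hB
  set a := algebraMap ℝ (H →L[ℂ] H) s - A
  set b := algebraMap ℝ (H →L[ℂ] H) s - B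
  have : A - B = b - a := by simp [a, b]
  rw [this]
  have e1 : hoW τ s A * a = 1 - τ ^ 2 • hoQ τ s A := by rw [← a3]; abel
  have e2 : b * hoW τ s B = 1 - τ ^ 2 • hoQ τ s B := by rw [← b4]; abel
  calc hoQ τ s A - hoQ τ s B = hoW τ s A * hoW τ s B - (1 - τ ^ 2 • hoQ τ s A) * hoQ τ s B
        + hoQ τ s A * (1 - τ ^ 2 • hoQ τ s B) - hoW τ s A * hoW τ s B := by
          simp only [sub_mul, mul_sub, one_mul, mul_one, smul_mul_assoc, mul_smul_comm]; abel
    _ = hoW τ s A * (b * hoQ τ s B) - (hoW τ s A * a) * hoQ τ s B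
        + hoQ τ s A * (b * hoW τ s B) - (hoQ τ s A * a) * hoW τ s B := by rw [e1, e2, b2, a1]
    _ = _ := by noncomm_ring

lemma ho_norms {τ : ℝ} (hτ : 0 < τ) (s : ℝ) (A : H →L[ℂ] H) (hA : IsSelfAdjoint A) (x : H) :
    τ ^ 2 * ‖hoQ τ s A x‖ ^ 2 + ‖hoW τ s A x‖ ^ 2 = (inner ℂ (hoQ τ s A x) x).re := by
  obtain ⟨a1, a2, a3, a4, a5⟩ := ho_facts hτ s A hA
  have hQ : IsSelfAdjoint (hoQ τ s A) := IsSelfAdjoint.cfc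
  have hW : IsSelfAdjoint (hoW τ s A) := IsSelfAdjoint.cfc
  conv_rhs => rw [← a5]
  have k1 : inner ℂ (hoQ τ s A (hoQ τ s A x)) x = inner ℂ (hoQ τ s A x) (hoQ τ s A x) :=
    hQ.isSymmetric _ _
  have k2 : inner ℂ (hoW τ s A (hoW τ s A x)) x = inner ℂ (hoW τ s A x) (hoW τ s A x) :=
    hW.isSymmetric _ _
  simp only [add_apply, smul_apply,
    mul_apply_eq_comp, inner_add_left, Complex.add_re]
  rw [k2, inner_smul_left_eq_smul, k1, inner_self_eq_norm_sq_to_K, inner_self_eq_norm_sq_to_K]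
  simp [← Complex.ofReal_pow]

lemma ho_pt {τ : ℝ} (hτ : 0 < τ) (s : ℝ) (A B : H →L[ℂ] H) (hA : IsSelfAdjoint A)
    (hB : IsSelfAdjoint B) (x y : H) :
    |(inner ℂ ((hoQ τ s A - hoQ τ s B) x) y).re| ≤
      ‖A - B‖ / (2 * τ) * ((inner ℂ (hoQ τ s B x) x).re + (inner ℂ (hoQ τ s A y) y).re) := by
  have hQ : IsSelfAdjoint (hoQ τ s A) := IsSelfAdjoint.cfc
  have hW : IsSelfAdjoint (hoW τ s A) := IsSelfAdjoint.cfc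
  rw [ho_diff hτ s A B hA hB, ← ho_norms hτ s A hA, ← ho_norms hτ s B hB]
  have k1 : inner ℂ ((hoW τ s A * (A - B) * hoQ τ s B) x) y
      = inner ℂ ((A - B) (hoQ τ s B x)) (hoW τ s A y) := hW.isSymmetric _ _
  have k2 : inner ℂ ((hoQ τ s A * (A - B) * hoW τ s B) x) y
      = inner ℂ ((A - B) (hoW τ s B x)) (hoQ τ s A y) := hQ.isSymmetric _ _
  have gen : ∀ u v : H, |(inner ℂ ((A - B) u) v).re| ≤ ‖A - B‖ * (‖u‖ * ‖v‖) := fun u v => by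
    calc _ ≤ ‖inner ℂ ((A - B) u) v‖ := Complex.abs_re_le_norm _
      _ ≤ ‖(A - B) u‖ * ‖v‖ := norm_inner_le_norm _ _
      _ ≤ (‖A - B‖ * ‖u‖) * ‖v‖ := by gcongr; exact (A - B).le_opNorm u
      _ = _ := by ring
  rw [add_apply, inner_add_left, Complex.add_re, k1, k2]
  refine (abs_add_le _ _).trans ((add_le_add (gen _ _) (gen _ _)).trans ?_)
  rw [← mul_add, div_mul_eq_mul_div, mul_div_assoc]
  refine mul_le_mul_of_nonneg_left ?_ (norm_nonneg _)
  rw [le_div_iff₀ (by positivity)]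
  nlinarith [sq_nonneg (τ * ‖hoQ τ s B x‖ - ‖hoW τ s A y‖),
    sq_nonneg (τ * ‖hoQ τ s A y‖ - ‖hoW τ s B x‖)]

lemma ho_int_kernel {τ : ℝ} (hτ : 0 < τ) (l : ℝ) :
    Integrable (fun s : ℝ => (τ ^ 2 + (s - l) ^ 2)⁻¹) ∧
    ∫ s : ℝ, (τ ^ 2 + (s - l) ^ 2)⁻¹ = Real.pi / τ := by
  have e : (fun s : ℝ => (τ ^ 2 + s ^ 2)⁻¹) = fun s : ℝ => (τ ^ 2)⁻¹ * (1 + (τ⁻¹ * s) ^ 2)⁻¹ := by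
    ext s
    rw [← mul_inv]
    congr 1
    field_simp
  have i1 : Integrable (fun s : ℝ => (τ ^ 2 + s ^ 2)⁻¹) := by
    rw [e]
    exact (integrable_inv_one_add_sq.comp_mul_left' (inv_ne_zero hτ.ne')).const_mul _
  refine ⟨i1.comp_sub_right l, ?_⟩
  rw [integral_sub_right_eq_self (fun s : ℝ => (τ ^ 2 + s ^ 2)⁻¹) l, e, integral_const_mul,
    Measure.integral_comp_mul_left (fun s : ℝ => (1 + s ^ 2)⁻¹), integral_univ_inv_one_add_sq]
  simp only [inv_inv, abs_of_pos hτ, smul_eq_mul]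
  field_simp

/-- operator form of the integral -/
lemma ho_cfc_integral {τ : ℝ} (hτ : 0 < τ) (h : ℝ → ℝ) (hc : Continuous h) (M : ℝ)
    (hM : ∀ s, |h s| ≤ M) (A : H →L[ℂ] H) (hA : IsSelfAdjoint A) :
    Integrable (fun s : ℝ => h s • hoQ τ s A) ∧
    cfc (fun l : ℝ => ∫ s : ℝ, h s * (τ ^ 2 + (s - l) ^ 2)⁻¹) A = ∫ s : ℝ, h s • hoQ τ s A := by
  have e : ∀ s : ℝ, h s • hoQ τ s A = cfc (fun l : ℝ => h s * (τ ^ 2 + (s - l) ^ 2)⁻¹) A := by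
    intro s
    unfold hoQ
    rw [← cfc_smul (h s) _ A (ho_cont hτ s).continuousOn]
    rfl
  simp_rw [e]
  have hM0 : 0 ≤ M := (abs_nonneg _).trans (hM 0)
  obtain ⟨R, hR0, hR⟩ : ∃ R : ℝ, 0 ≤ R ∧ ∀ z ∈ spectrum ℝ A, |z| ≤ R :=
    ⟨‖A‖, norm_nonneg _, fun z hz => IsometricContinuousFunctionalCalculus.norm_spectrum_le (𝕜 := ℝ) A hz⟩
  have hcont : ContinuousOn (Function.uncurry fun (s l : ℝ) => h s * (τ ^ 2 + (s - l) ^ 2)⁻¹)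
      (Set.univ ×ˢ spectrum ℝ A) := by
    refine Continuous.continuousOn ?_
    refine Continuous.mul (by fun_prop) (Continuous.inv₀ (by fun_prop) ?_)
    rintro ⟨s, l⟩
    exact (ho_pos hτ s l).ne'
  have hb : ∀ᵐ s : ℝ, ∀ z ∈ spectrum ℝ A, ‖h s * (τ ^ 2 + (s - z) ^ 2)⁻¹‖ ≤
      M * (2 + R ^ 2 / τ ^ 2 * 2) * (τ ^ 2 + (s - 0) ^ 2)⁻¹ := by
    refine .of_forall fun s z hz => ?_
    rw [norm_mul, Real.norm_eq_abs, norm_inv, Real.norm_of_nonneg (ho_pos hτ s z).le, mul_assoc]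
    refine mul_le_mul (hM s) ?_ (inv_nonneg.2 (ho_pos hτ s z).le) hM0
    rw [← div_eq_mul_inv, inv_eq_one_div, div_le_div_iff₀ (ho_pos hτ s z) (ho_pos hτ s 0)]
    have hz2 : z ^ 2 ≤ R ^ 2 := sq_le_sq' (abs_le.1 (hR z hz)).1 (abs_le.1 (hR z hz)).2
    have : (2 + R ^ 2 / τ ^ 2 * 2) * (τ ^ 2 + (s - z) ^ 2) =
      2 * τ ^ 2 + 2 * R ^ 2 + 2 * (s - z) ^ 2 + R ^ 2 / τ ^ 2 * 2 * (s - z) ^ 2 := by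
      field_simp; ring
    rw [this]
    have : 0 ≤ R ^ 2 / τ ^ 2 * 2 * (s - z) ^ 2 := by positivity
    nlinarith [sq_nonneg (s - 2 * z), sq_nonneg τ]
  have hbi := ((ho_int_kernel hτ 0).1.const_mul (M * (2 + R ^ 2 / τ ^ 2 * 2))).hasFiniteIntegral
  exact ⟨integrable_cfc _ _ A hcont hb hbi, cfc_integral _ _ A hcont hb hbi⟩

lemma ho_inner_integral {F : ℝ → H →L[ℂ] H} (hF : Integrable F) (x y : H) :
    Integrable (fun s => (inner ℂ (F s x) y).re) ∧
    (inner ℂ ((∫ s, F s) x) y).re = ∫ s, (inner ℂ (F s x) y).re := by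
  let T : (H →L[ℂ] H) →L[ℝ] ℝ :=
    Complex.reCLM.comp (((innerSL ℂ y).comp (ContinuousLinearMap.apply ℂ H x)).restrictScalars ℝ)
  have hT : ∀ G, T G = (inner ℂ (G x) y).re := by
    intro G
    rw [← Complex.conj_re, inner_conj_symm]
    simp [T]
  simp_rw [← hT]
  exact ⟨T.integrable_comp hF, (T.integral_comp_comm hF).symm⟩

lemma ho_poisson_lip {τ : ℝ} (hτ : 0 < τ) (h : ℝ → ℝ) (hc : Continuous h) (M : ℝ)
    (hM : ∀ s, |h s| ≤ M) (A B : H →L[ℂ] H) (hA : IsSelfAdjoint A) (hB : IsSelfAdjoint B) :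
    ‖cfc (fun l : ℝ => ∫ s : ℝ, h s * (τ ^ 2 + (s - l) ^ 2)⁻¹) A -
      cfc (fun l : ℝ => ∫ s : ℝ, h s * (τ ^ 2 + (s - l) ^ 2)⁻¹) B‖
      ≤ Real.pi * M / τ ^ 2 * ‖A - B‖ := by
  have hM0 : 0 ≤ M := (abs_nonneg _).trans (hM 0)
  have hpi := Real.pi_pos
  obtain ⟨iA, eA⟩ := ho_cfc_integral hτ h hc M hM A hA
  obtain ⟨iB, eB⟩ := ho_cfc_integral hτ h hc M hM B hB
  have one : ∀ (A : H →L[ℂ] H), IsSelfAdjoint A → ∀ x : H, ‖x‖ = 1 →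
      Integrable (fun s => (inner ℂ (hoQ τ s A x) x).re) ∧
      ∫ s, (inner ℂ (hoQ τ s A x) x).re = Real.pi / τ := by
    intro A hA x hx
    obtain ⟨i1, e1⟩ := ho_cfc_integral hτ (fun _ => 1) continuous_const 1 (by simp) A hA
    simp only [one_smul, one_mul, (ho_int_kernel hτ _).2] at i1 e1
    obtain ⟨i2, e2⟩ := ho_inner_integral i1 x x
    refine ⟨i2, ?_⟩
    rw [← e2, ← e1, cfc_const _ A, Algebra.algebraMap_eq_smul_one, smul_apply,
      one_apply_eq_self, inner_smul_left_eq_smul, inner_self_eq_norm_sq_to_K, hx]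
    simp
  rw [eA, eB, ← integral_sub iA iB]
  refine ContinuousLinearMap.opNorm_le_of_re_inner_le (𝕜 := ℂ) (by positivity) fun x y hx hy => ?_
  obtain ⟨i, e⟩ := ho_inner_integral (iA.sub iB) x y
  obtain ⟨jx, ex⟩ := one B hB x hx
  obtain ⟨jy, ey⟩ := one A hA y hy
  refine (le_of_eq e).trans ?_
  calc _ ≤ ∫ s, M * (‖A - B‖ / (2 * τ)) * ((inner ℂ (hoQ τ s B x) x).re +
        (inner ℂ (hoQ τ s A y) y).re) := by
        refine integral_mono i ((jx.add jy).const_mul _) fun s => ?_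
        have : (inner ℂ ((h s • hoQ τ s A - h s • hoQ τ s B) x) y).re =
          h s * (inner ℂ ((hoQ τ s A - hoQ τ s B) x) y).re := by
          rw [← smul_sub, smul_apply, inner_smul_left_eq_smul, Complex.real_smul,
            Complex.re_ofReal_mul]
        simp only [Pi.sub_apply]
        rw [this, mul_assoc]
        refine (le_abs_self _).trans ?_
        rw [abs_mul]
        exact mul_le_mul (hM s) (ho_pt hτ s A B hA hB x y) (abs_nonneg _) hM0
    _ = _ := by
        rw [integral_const_mul, integral_add jx jy, ex, ey]
        field_simp
        ring

end

noncomputable def hoK (r : ℝ) : ℝ := 2 / Real.pi * ((1 + r ^ 2)⁻¹ - (4 + r ^ 2)⁻¹)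

noncomputable def hoC (t : ℝ) (f : ℝ → ℝ) (x : ℝ) : ℝ := ∫ r : ℝ, hoK r * f (x + t * r)

lemma hoK_eq (r : ℝ) : hoK r = 6 / Real.pi * ((1 + r ^ 2)⁻¹ * (4 + r ^ 2)⁻¹) := by
  unfold hoK
  have h1 : (1 + r ^ 2) ≠ 0 := by positivity
  have h2 : (4 + r ^ 2) ≠ 0 := by positivity
  have := Real.pi_pos.ne'
  field_simp
  ring

lemma hoK_nonneg (r : ℝ) : 0 ≤ hoK r := by
  rw [hoK_eq]; have := Real.pi_pos; positivity

lemma hoK_cont : Continuous hoK := by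
  unfold hoK
  refine Continuous.mul continuous_const (Continuous.sub ?_ ?_)
  · exact Continuous.inv₀ (by fun_prop) (fun r => by positivity)
  · exact Continuous.inv₀ (by fun_prop) (fun r => by positivity)

lemma hoK_ker :
    Integrable (fun r : ℝ => (4 + r ^ 2)⁻¹) ∧ ∫ r : ℝ, (4 + r ^ 2)⁻¹ = Real.pi / 2 := by
  have := ho_int_kernel (τ := 2) (by norm_num) 0
  norm_num at this
  exact this

lemma hoK_int : Integrable hoK :=
  (integrable_inv_one_add_sq.sub hoK_ker.1).const_mul _

lemma hoK_integral : ∫ r, hoK r = 1 := by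
  unfold hoK
  rw [integral_const_mul, integral_sub integrable_inv_one_add_sq hoK_ker.1, hoK_ker.2,
    integral_univ_inv_one_add_sq]
  have := Real.pi_pos.ne'
  field_simp
  ring

lemma hoK_moment {α : ℝ} (h0 : 0 < α) (h1 : α < 1) :
    Integrable (fun r : ℝ => hoK r * |r| ^ α) ∧ ∫ r : ℝ, hoK r * |r| ^ α ≤ 6 := by
  have hb : ∀ r : ℝ, hoK r * |r| ^ α ≤ 6 / Real.pi * (1 + r ^ 2)⁻¹ := by
    intro r
    have hr : |r| ^ α ≤ 1 + |r| := by
      rcases le_total |r| 1 with h | h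
      · have := Real.rpow_le_one (abs_nonneg r) h h0.le
        linarith [abs_nonneg r]
      · have := Real.rpow_le_rpow_of_exponent_le h h1.le
        rw [Real.rpow_one] at this
        linarith
    have hr2 : |r| ^ α ≤ 4 + r ^ 2 := by
      have := sq_abs r
      nlinarith [sq_nonneg (|r| - 1), abs_nonneg r]
    rw [hoK_eq, ← mul_assoc, mul_assoc (6 / Real.pi * (1 + r ^ 2)⁻¹)]
    have hp := Real.pi_pos
    refine mul_le_of_le_one_right (by positivity) ?_
    rw [inv_mul_le_iff₀ (by positivity)]
    linarith
  have hi := integrable_inv_one_add_sq.const_mul (6 / Real.pi)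
  have i1 : Integrable (fun r : ℝ => hoK r * |r| ^ α) := by
    refine hi.mono' ?_ (.of_forall fun r => ?_)
    · refine Continuous.aestronglyMeasurable ?_
      exact hoK_cont.mul (continuous_abs.rpow_const fun x => Or.inr h0.le)
    · rw [Real.norm_of_nonneg (mul_nonneg (hoK_nonneg r) (by positivity))]
      exact hb r
  refine ⟨i1, (integral_mono i1 hi hb).trans (le_of_eq ?_)⟩
  rw [integral_const_mul, integral_univ_inv_one_add_sq]
  have := Real.pi_pos.ne'
  field_simp

section
variable {f g : ℝ → ℝ} {M N : ℝ}

lemma hoC_int (hf : Continuous f) (hM : ∀ x, |f x| ≤ M) (t x : ℝ) :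
    Integrable (fun r : ℝ => hoK r * f (x + t * r)) :=
  hoK_int.mul_bdd (c := M) (Continuous.aestronglyMeasurable (by fun_prop))
    (.of_forall fun r => hM _)

lemma hoC_cont (hf : Continuous f) (hM : ∀ x, |f x| ≤ M) (t : ℝ) : Continuous (hoC t f) := by
  unfold hoC
  refine continuous_of_dominated (bound := fun r => hoK r * M) (fun x => ?_) (fun x => ?_)
    (hoK_int.mul_const M) (.of_forall fun r => ?_)
  · exact (hoC_int hf hM t x).aestronglyMeasurable
  · refine .of_forall fun r => ?_
    rw [norm_mul, Real.norm_of_nonneg (hoK_nonneg r)]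
    exact mul_le_mul_of_nonneg_left (hM _) (hoK_nonneg r)
  · fun_prop

lemma hoC_bdd (hM : ∀ x, |f x| ≤ M) (t x : ℝ) : |hoC t f x| ≤ M := by
  unfold hoC
  have := norm_integral_le_of_norm_le (f := fun r => hoK r * f (x + t * r))
    (hoK_int.mul_const M) (.of_forall fun r => by
      rw [norm_mul, Real.norm_of_nonneg (hoK_nonneg r)]
      exact mul_le_mul_of_nonneg_left (hM _) (hoK_nonneg r))
  rwa [integral_mul_const, hoK_integral, one_mul] at this

lemma hoC_sub (hf : Continuous f) (hM : ∀ x, |f x| ≤ M) (hg : Continuous g) (hN : ∀ x, |g x| ≤ N)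
    (t x : ℝ) : hoC t (fun y => f y - g y) x = hoC t f x - hoC t g x := by
  unfold hoC
  rw [← integral_sub (hoC_int hf hM t x) (hoC_int hg hN t x)]
  simp only [mul_sub]

lemma hoC_comm (hf : Continuous f) (hM : ∀ x, |f x| ≤ M) (a b x : ℝ) :
    hoC a (hoC b f) x = hoC b (hoC a f) x := by
  unfold hoC
  simp_rw [← integral_const_mul]
  rw [integral_integral_swap]
  · refine integral_congr_ae (.of_forall fun r => integral_congr_ae (.of_forall fun r' => ?_))
    simp only
    rw [show x + a * r' + b * r = x + b * r + a * r' by ring]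
    ring
  · have := (hoK_int.mul_prod hoK_int).mul_bdd (c := M)
      (g := fun p : ℝ × ℝ => f (x + a * p.1 + b * p.2))
      (Continuous.aestronglyMeasurable (by fun_prop)) (.of_forall fun r => hM _)
    refine this.congr (.of_forall fun p => ?_)
    simp only [Function.uncurry]
    ring

lemma hoC_approx {α L : ℝ} (h0 : 0 < α) (h1 : α < 1) (hL : 0 ≤ L)
    (hH : ∀ x y : ℝ, |f x - f y| ≤ L * |x - y| ^ α)
    (hf : Continuous f) (hM : ∀ x, |f x| ≤ M) {t : ℝ} (ht : 0 < t) (x : ℝ) :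
    |hoC t f x - f x| ≤ 6 * L * t ^ α := by
  obtain ⟨i1, b1⟩ := hoK_moment h0 h1
  have e : hoC t f x - f x = ∫ r, hoK r * (f (x + t * r) - f x) := by
    simp only [mul_sub]
    rw [integral_sub (hoC_int hf hM t x) (hoK_int.mul_const _), integral_mul_const, hoK_integral,
      one_mul]
    rfl
  rw [e]
  have := norm_integral_le_of_norm_le (f := fun r => hoK r * (f (x + t * r) - f x))
    (i1.const_mul (L * t ^ α)) (.of_forall fun r => by
      rw [norm_mul, Real.norm_of_nonneg (hoK_nonneg r), mul_left_comm]
      refine mul_le_mul_of_nonneg_left ?_ (hoK_nonneg r)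
      refine (hH _ _).trans (le_of_eq ?_)
      rw [add_sub_cancel_left, abs_mul, abs_of_pos ht, Real.mul_rpow ht.le (abs_nonneg r)]
      ring)
  rw [integral_const_mul] at this
  refine this.trans ?_
  have : 0 ≤ L * t ^ α := by positivity
  nlinarith

lemma hoG_cont (hf : Continuous f) (hM : ∀ x, |f x| ≤ M) {τ : ℝ} (hτ : 0 < τ) :
    Continuous (fun l : ℝ => ∫ s : ℝ, f s * (τ ^ 2 + (s - l) ^ 2)⁻¹) := by
  have e : ∀ l : ℝ, ∫ s : ℝ, f s * (τ ^ 2 + (s - l) ^ 2)⁻¹ =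
      ∫ s : ℝ, f (s + l) * (τ ^ 2 + (s - 0) ^ 2)⁻¹ := fun l => by
    rw [← integral_add_right_eq_self _ l]
    simp
  simp_rw [e]
  have hi := (ho_int_kernel hτ 0).1
  refine continuous_of_dominated (bound := fun s => M * (τ ^ 2 + (s - 0) ^ 2)⁻¹) (fun x => ?_)
    (fun x => ?_) (hi.const_mul M) (.of_forall fun r => ?_)
  · exact (hi.bdd_mul (c := M) (Continuous.aestronglyMeasurable (by fun_prop))
      (.of_forall fun r => hM _)).aestronglyMeasurable
  · refine .of_forall fun r => ?_
    rw [norm_mul, norm_inv, Real.norm_of_nonneg (ho_pos hτ r 0).le]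
    exact mul_le_mul_of_nonneg_right (hM _) (inv_nonneg.2 (ho_pos hτ r 0).le)
  · fun_prop

lemma hoC_eq (hf : Continuous f) (hM : ∀ x, |f x| ≤ M) {t : ℝ} (ht : 0 < t) (l : ℝ) :
    hoC t f l = 2 * t / Real.pi * ((∫ s : ℝ, f s * (t ^ 2 + (s - l) ^ 2)⁻¹) -
      ∫ s : ℝ, f s * ((2 * t) ^ 2 + (s - l) ^ 2)⁻¹) := by
  have ii : ∀ τ : ℝ, 0 < τ → Integrable (fun s : ℝ => f s * (τ ^ 2 + (s - l) ^ 2)⁻¹) :=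
    fun τ hτ => (ho_int_kernel hτ l).1.bdd_mul (c := M) hf.aestronglyMeasurable
      (.of_forall fun r => hM _)
  have h2t : 0 < 2 * t := by linarith
  rw [← integral_sub (ii t ht) (ii _ h2t), ← integral_const_mul,
    ← integral_add_right_eq_self _ l]
  have := Measure.integral_comp_mul_left (fun s : ℝ => 2 * t / Real.pi * (f (s + l) *
    (t ^ 2 + (s + l - l) ^ 2)⁻¹ - f (s + l) * ((2 * t) ^ 2 + (s + l - l) ^ 2)⁻¹)) t
  rw [abs_of_pos (inv_pos.2 ht), smul_eq_mul, eq_inv_mul_iff_mul_eq₀ ht.ne'] at this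
  rw [← this, ← integral_const_mul]
  unfold hoC
  refine integral_congr_ae (.of_forall fun r => ?_)
  simp only [add_sub_cancel_right, hoK]
  rw [add_comm l]
  have h1 : (1 + r ^ 2) ≠ 0 := by positivity
  have h2 : (4 + r ^ 2) ≠ 0 := by positivity
  have := Real.pi_pos.ne'
  rw [show t ^ 2 + (t * r) ^ 2 = t ^ 2 * (1 + r ^ 2) by ring,
    show (2 * t) ^ 2 + (t * r) ^ 2 = t ^ 2 * (4 + r ^ 2) by ring, mul_inv, mul_inv]
  field_simp

lemma hoC_lip (hf : Continuous f) (hM : ∀ x, |f x| ≤ M) {t : ℝ} (ht : 0 < t)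
    {H : Type} [NormedAddCommGroup H] [InnerProductSpace ℂ H] [CompleteSpace H]
    (A B : H →L[ℂ] H) (hA : IsSelfAdjoint A) (hB : IsSelfAdjoint B) :
    ‖cfc (hoC t f) A - cfc (hoC t f) B‖ ≤ 5 / 2 * M / t * ‖A - B‖ := by
  have h2t : 0 < 2 * t := by linarith
  have e : hoC t f = fun l => (2 * t / Real.pi) • ((∫ s : ℝ, f s * (t ^ 2 + (s - l) ^ 2)⁻¹) -
      ∫ s : ℝ, f s * ((2 * t) ^ 2 + (s - l) ^ 2)⁻¹) := by
    ext l; exact hoC_eq hf hM ht l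
  have c1 := hoG_cont hf hM ht
  have c2 := hoG_cont hf hM h2t
  have eX : ∀ X : H →L[ℂ] H, cfc (hoC t f) X = (2 * t / Real.pi) •
      (cfc (fun l : ℝ => ∫ s : ℝ, f s * (t ^ 2 + (s - l) ^ 2)⁻¹) X -
       cfc (fun l : ℝ => ∫ s : ℝ, f s * ((2 * t) ^ 2 + (s - l) ^ 2)⁻¹) X) := by
    intro X
    have c3 : ContinuousOn (fun l : ℝ => (∫ s : ℝ, f s * (t ^ 2 + (s - l) ^ 2)⁻¹) -
      ∫ s : ℝ, f s * ((2 * t) ^ 2 + (s - l) ^ 2)⁻¹) (spectrum ℝ X) := (c1.sub c2).continuousOn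
    rw [e, cfc_smul _ _ X c3, cfc_sub _ _ X c1.continuousOn c2.continuousOn]
  rw [eX A, eX B, ← smul_sub, norm_smul, sub_sub_sub_comm]
  have n1 := ho_poisson_lip ht f hf M hM A B hA hB
  have n2 := ho_poisson_lip h2t f hf M hM A B hA hB
  have hp := Real.pi_pos
  rw [Real.norm_of_nonneg (by positivity)]
  calc _ ≤ 2 * t / Real.pi * (Real.pi * M / t ^ 2 * ‖A - B‖ +
        Real.pi * M / (2 * t) ^ 2 * ‖A - B‖) := by
        gcongr
        exact (norm_sub_le _ _).trans (add_le_add n1 n2)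
    _ = _ := by field_simp; ring

end

lemma ho_telescope {α L M : ℝ} (h0 : 0 < α) (h1 : α < 1) (hL : 0 ≤ L) {f : ℝ → ℝ}
    (hH : ∀ x y : ℝ, |f x - f y| ≤ L * |x - y| ^ α)
    (hf : Continuous f) (hM : ∀ x, |f x| ≤ M)
    {H : Type} [NormedAddCommGroup H] [InnerProductSpace ℂ H] [CompleteSpace H]
    (A B : H →L[ℂ] H) (hA : IsSelfAdjoint A) (hB : IsSelfAdjoint B) {t : ℝ} (ht : 0 < t) :
    ‖cfc (hoC t (hoC t f)) A - cfc (hoC t (hoC t f)) B‖ ≤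
      ‖cfc (hoC (2 * t) (hoC (2 * t) f)) A - cfc (hoC (2 * t) (hoC (2 * t) f)) B‖ +
        135 / 2 * L * t ^ (α - 1) * ‖A - B‖ := by
  have h2t : 0 < 2 * t := by linarith
  set d : ℝ → ℝ := fun y => hoC t f y - hoC (2 * t) f y with hd
  have k1 := hoC_cont hf hM t
  have k2 := hoC_cont hf hM (2 * t)
  have b1 := hoC_bdd hM t
  have b2 := hoC_bdd hM (2 * t)
  have dc : Continuous d := k1.sub k2
  have db : ∀ x, |d x| ≤ 18 * L * t ^ α := by
    intro x
    have a1 := hoC_approx h0 h1 hL hH hf hM ht x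
    have a2 := hoC_approx h0 h1 hL hH hf hM h2t x
    have a3 : (2 * t) ^ α ≤ 2 * t ^ α := by
      rw [Real.mul_rpow (by norm_num) ht.le]
      gcongr
      calc (2 : ℝ) ^ α ≤ 2 ^ (1 : ℝ) := Real.rpow_le_rpow_of_exponent_le (by norm_num) h1.le
        _ = 2 := Real.rpow_one 2
    have a4 : 6 * L * (2 * t) ^ α ≤ 6 * L * (2 * t ^ α) := by gcongr
    have : d x = (hoC t f x - f x) - (hoC (2 * t) f x - f x) := by simp [hd]
    rw [this]
    refine (abs_sub _ _).trans ?_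
    linarith
  have e : hoC t (hoC t f) = fun x => hoC t d x + hoC (2 * t) d x + hoC (2 * t) (hoC (2 * t) f) x := by
    ext x
    rw [hd, hoC_sub k1 b1 k2 b2, hoC_sub k1 b1 k2 b2, hoC_comm hf hM t (2 * t)]
    ring
  have c1 := hoC_cont dc db t
  have c2 := hoC_cont dc db (2 * t)
  have c3 := hoC_cont k2 b2 (2 * t)
  have eX : ∀ X : H →L[ℂ] H, cfc (hoC t (hoC t f)) X = cfc (hoC t d) X + cfc (hoC (2 * t) d) X +
      cfc (hoC (2 * t) (hoC (2 * t) f)) X := by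
    intro X
    have c12 : ContinuousOn (fun x => hoC t d x + hoC (2 * t) d x) (spectrum ℝ X) :=
      (c1.add c2).continuousOn
    rw [e, cfc_add X _ _ c12 c3.continuousOn, cfc_add X _ _ c1.continuousOn c2.continuousOn]
  have n1 := hoC_lip dc db ht A B hA hB
  have n2 := hoC_lip dc db h2t A B hA hB
  rw [eX A, eX B]
  have ee : ∀ a b c a' b' c' : H →L[ℂ] H, ‖a + b + c - (a' + b' + c')‖ ≤
      ‖c - c'‖ + (‖a - a'‖ + ‖b - b'‖) := by
    intro a b c a' b' c'
    have : a + b + c - (a' + b' + c') = (c - c') + ((a - a') + (b - b')) := by abel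
    rw [this]
    exact (norm_add_le _ _).trans (by gcongr; exact norm_add_le _ _)
  refine (ee _ _ _ _ _ _).trans ?_
  gcongr
  refine (add_le_add n1 n2).trans (le_of_eq ?_)
  rw [Real.rpow_sub_one ht.ne']
  field_simp
  ring

lemma ho_bounded {α L M : ℝ} (h0 : 0 < α) (h1 : α < 1) (hL : 0 ≤ L) {f : ℝ → ℝ}
    (hH : ∀ x y : ℝ, |f x - f y| ≤ L * |x - y| ^ α)
    (hf : Continuous f) (hM : ∀ x, |f x| ≤ M)
    {H : Type} [NormedAddCommGroup H] [InnerProductSpace ℂ H] [CompleteSpace H]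
    (A B : H →L[ℂ] H) (hA : IsSelfAdjoint A) (hB : IsSelfAdjoint B) :
    ‖cfc f A - cfc f B‖ ≤ 159 * (1 - α)⁻¹ * L * ‖A - B‖ ^ α := by
  have h1α : 0 < 1 - α := by linarith
  rcases eq_or_ne A B with rfl | hne
  · simp only [sub_self, norm_zero]; positivity
  set δ := ‖A - B‖ with hδ
  have hδ0 : 0 < δ := norm_pos_iff.2 (sub_ne_zero.2 hne)
  set F : ℝ → ℝ → ℝ := fun t => hoC t (hoC t f) with hF
  set ρ : ℝ := 2 ^ (α - 1) with hρ
  have hρ0 : 0 < ρ := by positivity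
  have hρ1 : (1 - α) / 2 ≤ 1 - ρ := by
    have := rpow_one_add_le_one_add_mul_self (s := 1) (by norm_num) h0.le h1.le
    rw [hρ, Real.rpow_sub_one (by norm_num)]
    norm_num at this
    linarith
  have hρ2 : 0 < 1 - ρ := by linarith
  have tel : ∀ n : ℕ, ‖cfc (F δ) A - cfc (F δ) B‖ ≤
      ‖cfc (F (2 ^ n * δ)) A - cfc (F (2 ^ n * δ)) B‖ +
        135 / 2 * L * δ ^ α * ∑ k ∈ Finset.range n, ρ ^ k := by
    intro n
    induction n with
    | zero => simp
    | succ n ih =>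
      have hp : 0 < 2 ^ n * δ := by positivity
      have := ho_telescope h0 h1 hL hH hf hM A B hA hB hp
      have e1 : (2 ^ n * δ) ^ (α - 1) * δ = δ ^ α * ρ ^ n := by
        rw [Real.mul_rpow (by positivity) hδ0.le, Real.rpow_sub_one hδ0.ne',
          ← Real.rpow_natCast 2 n, ← Real.rpow_mul (by norm_num), mul_comm (n : ℝ),
          Real.rpow_mul (by norm_num), Real.rpow_natCast, ← hρ]
        field_simp
      rw [← hδ, mul_assoc _ _ δ, e1] at this
      rw [Finset.sum_range_succ, pow_succ', mul_assoc 2]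
      refine ih.trans ?_
      simp only [hF]
      linarith
  have lim : ∀ n : ℕ, ‖cfc (F δ) A - cfc (F δ) B‖ ≤
      5 / 2 * M * (1 / 2) ^ n + 135 * (1 - α)⁻¹ * L * δ ^ α := by
    intro n
    have hp : 0 < 2 ^ n * δ := by positivity
    have l1 := hoC_lip (hoC_cont hf hM (2 ^ n * δ)) (hoC_bdd hM (2 ^ n * δ)) hp A B hA hB
    have l2 : ∑ k ∈ Finset.range n, ρ ^ k ≤ 2 * (1 - α)⁻¹ := by
      calc ∑ k ∈ Finset.range n, ρ ^ k ≤ (1 - ρ)⁻¹ := by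
            rw [← tsum_geometric_of_lt_one hρ0.le (by linarith)]
            exact (summable_geometric_of_lt_one hρ0.le (by linarith)).sum_le_tsum _
              (fun _ _ => by positivity)
        _ ≤ ((1 - α) / 2)⁻¹ := inv_anti₀ (by positivity) hρ1
        _ = _ := by rw [inv_div]; ring
    refine (tel n).trans (add_le_add (l1.trans (le_of_eq ?_)) ?_)
    · rw [← hδ, one_div, inv_pow]
      field_simp
    · calc _ ≤ 135 / 2 * L * δ ^ α * (2 * (1 - α)⁻¹) := by gcongr
        _ = _ := by ring
  have main : ‖cfc (F δ) A - cfc (F δ) B‖ ≤ 135 * (1 - α)⁻¹ * L * δ ^ α := by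
    have lt : Filter.Tendsto (fun n : ℕ => 5 / 2 * M * (1 / 2 : ℝ) ^ n +
        135 * (1 - α)⁻¹ * L * δ ^ α) Filter.atTop
        (nhds (5 / 2 * M * 0 + 135 * (1 - α)⁻¹ * L * δ ^ α)) :=
      ((tendsto_pow_atTop_nhds_zero_of_lt_one (by norm_num) (by norm_num)).const_mul _).add_const _
    have := ge_of_tendsto' lt lim
    simpa using this
  have k1 := hoC_cont hf hM δ
  have b1 := hoC_bdd hM δ
  have k2 := hoC_cont k1 b1 δ
  have app : ∀ X : H →L[ℂ] H, ‖cfc f X - cfc (F δ) X‖ ≤ 12 * L * δ ^ α := by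
    intro X
    rw [← cfc_sub f (F δ) X hf.continuousOn k2.continuousOn]
    refine norm_cfc_le (by positivity) fun x _ => ?_
    have a1 := hoC_approx h0 h1 hL hH hf hM hδ0
    have a2 := hoC_bdd a1 δ x
    rw [hoC_sub k1 b1 hf hM] at a2
    have a3 := a1 x
    rw [Real.norm_eq_abs]
    simp only [hF]
    rw [abs_le] at *
    constructor <;> linarith
  have fin : cfc f A - cfc f B = (cfc f A - cfc (F δ) A) + (cfc (F δ) A - cfc (F δ) B) -
    (cfc f B - cfc (F δ) B) := by abel
  rw [fin]
  refine (norm_sub_le _ _).trans ((add_le_add ((norm_add_le _ _).trans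
    (add_le_add (app A) main)) (app B)).trans ?_)
  have hinv : 1 ≤ (1 - α)⁻¹ := (one_le_inv₀ h1α).2 (by linarith)
  have hp : 0 ≤ L * δ ^ α := by positivity
  nlinarith

/-- Hölder functions are operator Hölder: there is a constant `c > 0` such that
for every `α ∈ (0,1)`, every `L ≥ 0`, every `f : ℝ → ℝ` with
`|f x - f y| ≤ L * |x - y|^α`, and all bounded self-adjoint operators `A`, `B`
on a complex Hilbert space, `‖f(A) - f(B)‖ ≤ c * (1-α)⁻¹ * L * ‖A - B‖^α`. -/
theorem stmt_6 :
    ∃ c : ℝ, 0 < c ∧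
      ∀ (α L : ℝ), α ∈ Set.Ioo (0 : ℝ) 1 → 0 ≤ L →
        ∀ f : ℝ → ℝ, (∀ x y : ℝ, |f x - f y| ≤ L * |x - y| ^ α) →
          ∀ (H : Type) [NormedAddCommGroup H] [InnerProductSpace ℂ H] [CompleteSpace H]
            (A B : H →L[ℂ] H), IsSelfAdjoint A → IsSelfAdjoint B →
            ‖cfc f A - cfc f B‖ ≤ c * (1 - α)⁻¹ * L * ‖A - B‖ ^ α := by
  refine ⟨159, by norm_num, ?_⟩
  rintro α L ⟨h0, h1⟩ hL f hH H _ _ _ A B hA hB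
  set R : ℝ := max ‖A‖ ‖B‖ with hR
  have hR0 : 0 ≤ R := (norm_nonneg A).trans (le_max_left _ _)
  set c : ℝ → ℝ := fun x => max (-R) (min x R) with hc
  have c_id : ∀ x, |x| ≤ R → c x = x := by
    intro x hx
    obtain ⟨p, q⟩ := abs_le.1 hx
    simp [hc, p, q]
  have c_le : ∀ x, |c x| ≤ R := by
    intro x
    rw [abs_le]
    exact ⟨le_max_left _ _, max_le (by linarith) (min_le_right _ _)⟩
  have c_lip : ∀ x y, |c x - c y| ≤ |x - y| := by
    intro x y
    refine (abs_max_sub_max_le_max _ _ _ _).trans ?_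
    have := abs_min_sub_min_le_max x R y R
    simp only [sub_self, abs_zero] at this ⊢
    refine max_le (abs_nonneg _) (this.trans (max_le le_rfl (abs_nonneg _)))
  have gH : ∀ x y : ℝ, |f (c x) - f (c y)| ≤ L * |x - y| ^ α := fun x y =>
    (hH _ _).trans (mul_le_mul_of_nonneg_left
      (Real.rpow_le_rpow (abs_nonneg _) (c_lip x y) h0.le) hL)
  have gM : ∀ x, |f (c x)| ≤ |f 0| + L * R ^ α := by
    intro x
    have h := hH (c x) 0
    rw [sub_zero] at h
    have h2 : L * |c x| ^ α ≤ L * R ^ α :=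
      mul_le_mul_of_nonneg_left (Real.rpow_le_rpow (abs_nonneg _) (c_le x) h0.le) hL
    have h3 := abs_sub_abs_le_abs_sub (f (c x)) (f 0)
    linarith
  have gc : Continuous (fun x => f (c x)) := by
    rw [continuous_iff_continuousAt]
    intro x
    rw [ContinuousAt, tendsto_iff_dist_tendsto_zero]
    refine squeeze_zero (fun _ => dist_nonneg) (fun y => gH y x) ?_
    have hk : Continuous (fun y : ℝ => L * |y - x| ^ α) :=
      continuous_const.mul ((by fun_prop : Continuous fun y : ℝ => |y - x|).rpow_const
        fun _ => Or.inr h0.le)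
    have := hk.tendsto x
    simpa [Real.zero_rpow h0.ne'] using this
  have cg : ∀ X : H →L[ℂ] H, IsSelfAdjoint X → ‖X‖ ≤ R → cfc f X = cfc (fun x => f (c x)) X := by
    intro X hX hXR
    refine cfc_congr fun x hx => ?_
    have : |x| ≤ R :=
      (IsometricContinuousFunctionalCalculus.norm_spectrum_le (𝕜 := ℝ) X hx).trans hXR
    simp only [c_id x this]
  rw [cg A hA (le_max_left _ _), cg B hB (le_max_right _ _)]
  exact ho_bounded h0 h1 hL gH gc gM A B hA hB
end
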